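/- arXiv:2102.02280 — 5 statements merged into one kernel-verified Lean document; each statement's English description precedes it below -/
import Mathlib

section
/- Fix t > 0, and for real Δ ≠ 0 let Re P(1+iΔ) = lim_{u→∞} ∑_{p ≤ u, p prime} cos(Δ log p)/p (this limit exists for Δ ≠ 0) and Re P_t(1+iΔ) = ∑_{p ≤ t, p prime} cos(Δ log p)/p. Then lim_{T→∞} (1/T) ∫_0^T ( Re P_t(1+iΔ) − Re P(1+iΔ) )² dΔ = (1/2) ∑_{p > t, p prime} 1/p² = (P(2) − P_t(2))/2, which tends to 0 as t → ∞. -/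
open MeasureTheory Filter Real

/-- The set of primes `p ≤ t`. -/
noncomputable def primesUpTo (t : ℝ) : Finset ℕ :=
  (Finset.range (⌊t⌋₊ + 1)).filter Nat.Prime

/-- The tail sum `(1/2) ∑_{p > t} 1/p²`. -/
noncomputable def tailSum (t : ℝ) : ℝ :=
  (1 / 2) * ∑' p : Nat.Primes, if t < ((p : ℕ) : ℝ) then 1 / ((p : ℕ) : ℝ) ^ 2 else 0

/-!
Distinct primes have distinct frequencies `log p`, so a finite sum `∑ a_p cos (s log p)` has mean
square `(1/2) ∑ a_p²`. What remains is to show that the tail over primes `M < p ≤ u` has mean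
square at most `C (1/M + (1 + log T)/T)` on `[0, T]`, uniformly in `u`; Fatou's lemma then carries
the bound to `u → ∞`, and `M → ∞` gives the theorem by the triangle inequality in `L²`.

Majorising the indicator of `[0, T]` by `e^{1 - s/T}` bounds the integral over `[0, T]` of the
square of the tail by a constant times `∑_{p, q} (1/(p q)) T / (1 + (T log (q/p))²)`. For fixed
`p`, the terms with `q ≥ p` split into windows `j ≤ T log (q/p) < j + 1`, which are intervals of
length about `q/T`. Counting all integers in the windows gives `O(1/p + T/p²)` for each `p`, and
summing the first term over `p ≤ T²` costs `log T`. For `p > T²` the windows are longer than `√p`,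
and Brun's pure sieve saves a factor `√(log p)`, which is enough because `∑ 1/(p √(log p))` over
the primes converges.
-/

section CosineSums

variable {ι : Type*}

lemma tendsto_mean_cos {x : ℝ} (hx : x ≠ 0) :
    Tendsto (fun T : ℝ => (1 / T) * ∫ s in (0 : ℝ)..T, cos (s * x)) atTop (nhds 0) := by
  have hcos (T : ℝ) : (1 / T) * ∫ s in (0 : ℝ)..T, cos (s * x) = T⁻¹ * (sin (T * x) / x) := by
    rw [intervalIntegral.integral_comp_mul_right _ hx, integral_cos]
    simp [div_eq_inv_mul]
  simp_rw [hcos]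
  refine tendsto_inv_atTop_zero.zero_mul_isBoundedUnder_le
    (isBoundedUnder_of ⟨1 / |x|, fun T => ?_⟩)
  rw [Function.comp_apply, norm_eq_abs, abs_div]
  gcongr
  exact abs_sin_le_one _

lemma cos_mul_mul_cos_mul (s x y : ℝ) :
    cos (s * x) * cos (s * y) = 1 / 2 * (cos (s * (x - y)) + cos (s * (x + y))) := by
  rw [mul_sub s, mul_add s]
  linarith [two_mul_cos_mul_cos (s * x) (s * y)]

lemma tendsto_mean_cos_mul_cos {x y : ℝ} (hx : 0 < x) (hy : 0 < y) :
    Tendsto (fun T : ℝ => (1 / T) * ∫ s in (0 : ℝ)..T, cos (s * x) * cos (s * y)) atTop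
      (nhds (if x = y then 1 / 2 else 0)) := by
  have hprod (T : ℝ) : (1 / T) * ∫ s in (0 : ℝ)..T, cos (s * x) * cos (s * y) =
      1 / 2 * ((1 / T) * ∫ s in (0 : ℝ)..T, cos (s * (x - y))) +
        1 / 2 * ((1 / T) * ∫ s in (0 : ℝ)..T, cos (s * (x + y))) := by
    simp_rw [cos_mul_mul_cos_mul]
    rw [intervalIntegral.integral_const_mul, intervalIntegral.integral_add
      (Continuous.intervalIntegrable (by fun_prop) _ _)
      (Continuous.intervalIntegrable (by fun_prop) _ _)]
    ring
  have hdiff : Tendsto (fun T : ℝ => (1 / T) * ∫ s in (0 : ℝ)..T, cos (s * (x - y))) atTop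
      (nhds (if x = y then 1 else 0)) := by
    split_ifs with hxy
    · refine tendsto_const_nhds.congr' ?_
      filter_upwards [eventually_ne_atTop 0] with T hT
      simp [hxy, hT]
    · exact tendsto_mean_cos (sub_ne_zero.mpr hxy)
  simp_rw [hprod]
  convert (hdiff.const_mul (1 / 2)).add
    ((tendsto_mean_cos (add_pos hx hy).ne').const_mul (1 / 2)) using 2
  split_ifs <;> simp

lemma tendsto_mean_sq_sum_cos (S : Finset ι) (a : ι → ℝ) {ν : ι → ℝ}
    (hν : ∀ i ∈ S, 0 < ν i) (hinj : Set.InjOn ν S) :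
    Tendsto (fun T : ℝ => (1 / T) * ∫ s in (0 : ℝ)..T, (∑ i ∈ S, a i * cos (s * ν i)) ^ 2) atTop
      (nhds (1 / 2 * ∑ i ∈ S, a i ^ 2)) := by
  classical
  have hsq (T : ℝ) : (1 / T) * ∫ s in (0 : ℝ)..T, (∑ i ∈ S, a i * cos (s * ν i)) ^ 2 =
      ∑ i ∈ S, ∑ j ∈ S,
        a i * a j * ((1 / T) * ∫ s in (0 : ℝ)..T, cos (s * ν i) * cos (s * ν j)) := by
    simp_rw [sq, Finset.sum_mul_sum, mul_mul_mul_comm]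
    rw [intervalIntegral.integral_finsetSum
      (fun i _ => Continuous.intervalIntegrable (by fun_prop) _ _), Finset.mul_sum]
    refine Finset.sum_congr rfl fun i _ => ?_
    rw [intervalIntegral.integral_finsetSum
      (fun j _ => Continuous.intervalIntegrable (by fun_prop) _ _), Finset.mul_sum]
    refine Finset.sum_congr rfl fun j _ => ?_
    rw [intervalIntegral.integral_const_mul]
    ring
  have hdiag : 1 / 2 * ∑ i ∈ S, a i ^ 2 =
      ∑ i ∈ S, ∑ j ∈ S, a i * a j * (if ν i = ν j then 1 / 2 else 0) := by
    rw [Finset.mul_sum]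
    refine Finset.sum_congr rfl fun i hi => ?_
    rw [Finset.sum_eq_single_of_mem i hi fun j hj hji => by
      rw [if_neg fun h => hji (hinj hj hi h.symm), mul_zero]]
    simp only [if_true]
    ring
  simp_rw [hsq, hdiag]
  exact tendsto_finsetSum _ fun i hi => tendsto_finsetSum _ fun j hj =>
    (tendsto_mean_cos_mul_cos (hν i hi) (hν j hj)).const_mul _

lemma integrableOn_exp_neg_mul_cos {b : ℝ} (hb : 0 < b) (x : ℝ) :
    IntegrableOn (fun s => exp (-b * s) * cos (s * x)) (Set.Ioi 0) := by
  refine (integrableOn_exp_mul_Ioi (neg_lt_zero.mpr hb) 0).mono'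
    (Continuous.aestronglyMeasurable (by fun_prop)) (ae_of_all _ fun s => ?_)
  rw [norm_mul, norm_of_nonneg (exp_pos _).le]
  exact mul_le_of_le_one_right (exp_pos _).le (abs_cos_le_one _)

lemma integral_exp_neg_mul_cos {b : ℝ} (hb : 0 < b) (x : ℝ) :
    ∫ s in Set.Ioi (0 : ℝ), exp (-b * s) * cos (s * x) = b / (b ^ 2 + x ^ 2) := by
  have hre : (-b + x * Complex.I : ℂ).re < 0 := by simpa using hb
  have hexp (s : ℝ) :
      exp (-b * s) * cos (s * x) = RCLike.re (Complex.exp ((-b + x * Complex.I) * s)) := by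
    simp [Complex.exp_re, mul_comm]
  simp_rw [hexp]
  rw [integral_re (integrableOn_exp_mul_complex_Ioi hre 0), integral_exp_mul_complex_Ioi hre 0]
  simp [Complex.normSq_apply, sq, neg_div]

lemma integrableOn_exp_neg_mul_cos_mul_cos {b : ℝ} (hb : 0 < b) (x y : ℝ) :
    IntegrableOn (fun s => exp (-b * s) * (cos (s * x) * cos (s * y))) (Set.Ioi 0) := by
  refine (integrableOn_exp_mul_Ioi (neg_lt_zero.mpr hb) 0).mono'
    (Continuous.aestronglyMeasurable (by fun_prop)) (ae_of_all _ fun s => ?_)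
  rw [norm_mul, norm_of_nonneg (exp_pos _).le, norm_mul]
  exact mul_le_of_le_one_right (exp_pos _).le
    (mul_le_one₀ (abs_cos_le_one _) (norm_nonneg _) (abs_cos_le_one _))

lemma integral_exp_neg_mul_cos_mul_cos_le {b x y : ℝ} (hb : 0 < b) (hx : 0 ≤ x) (hy : 0 ≤ y) :
    ∫ s in Set.Ioi (0 : ℝ), exp (-b * s) * (cos (s * x) * cos (s * y)) ≤
      b / (b ^ 2 + (y - x) ^ 2) := by
  have hadd (s : ℝ) : exp (-b * s) * (cos (s * x) * cos (s * y)) =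
      1 / 2 * (exp (-b * s) * cos (s * (x - y)) + exp (-b * s) * cos (s * (x + y))) := by
    rw [cos_mul_mul_cos_mul]
    ring
  have hle : b / (b ^ 2 + (x + y) ^ 2) ≤ b / (b ^ 2 + (y - x) ^ 2) := by
    gcongr b / (b ^ 2 + ?_)
    nlinarith [mul_nonneg hx hy]
  simp_rw [hadd]
  rw [integral_const_mul, integral_add (integrableOn_exp_neg_mul_cos hb _)
    (integrableOn_exp_neg_mul_cos hb _), integral_exp_neg_mul_cos hb, integral_exp_neg_mul_cos hb,
    sub_sq_comm x y]
  linarith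

lemma intervalIntegral_le_exp_one_mul_integral_exp_neg_mul {T : ℝ} (hT : 0 < T) {f : ℝ → ℝ}
    (hf : ∀ s, 0 ≤ f s) (hint : IntegrableOn (fun s => exp (-T⁻¹ * s) * f s) (Set.Ioi 0)) :
    ∫ s in (0 : ℝ)..T, f s ≤ exp 1 * ∫ s in Set.Ioi (0 : ℝ), exp (-T⁻¹ * s) * f s := by
  have hweight : ∀ s ∈ Set.Ioc 0 T, f s ≤ exp 1 * (exp (-T⁻¹ * s) * f s) := fun s hs => by
    rw [← mul_assoc, ← exp_add]
    refine le_mul_of_one_le_left (hf s) (one_le_exp ?_)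
    linarith [(inv_mul_le_one₀ hT).mpr hs.2]
  rw [intervalIntegral.integral_of_le hT.le, ← integral_const_mul]
  calc ∫ s in Set.Ioc 0 T, f s ≤ ∫ s in Set.Ioc 0 T, exp 1 * (exp (-T⁻¹ * s) * f s) :=
        integral_mono_of_nonneg (ae_of_all _ hf)
          ((hint.mono_set Set.Ioc_subset_Ioi_self).const_mul _)
          (ae_restrict_of_forall_mem measurableSet_Ioc hweight)
    _ ≤ ∫ s in Set.Ioi 0, exp 1 * (exp (-T⁻¹ * s) * f s) :=
        setIntegral_mono_set (hint.const_mul _)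
          (ae_of_all _ fun s => mul_nonneg (exp_pos _).le (mul_nonneg (exp_pos _).le (hf s)))
          Set.Ioc_subset_Ioi_self.eventuallyLE

lemma integral_sq_sum_cos_le {T : ℝ} (hT : 0 < T) (S : Finset ι) {a ν : ι → ℝ}
    (ha : ∀ i ∈ S, 0 ≤ a i) (hν : ∀ i ∈ S, 0 ≤ ν i) :
    ∫ s in (0 : ℝ)..T, (∑ i ∈ S, a i * cos (s * ν i)) ^ 2 ≤
      exp 1 * ∑ i ∈ S, ∑ j ∈ S, a i * a j * (T / (1 + (T * (ν j - ν i)) ^ 2)) := by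
  have hexpand (s : ℝ) : exp (-T⁻¹ * s) * (∑ i ∈ S, a i * cos (s * ν i)) ^ 2 =
      ∑ i ∈ S, ∑ j ∈ S, a i * a j * (exp (-T⁻¹ * s) * (cos (s * ν i) * cos (s * ν j))) := by
    simp only [sq, Finset.sum_mul_sum]
    simp only [Finset.mul_sum]
    exact Finset.sum_congr rfl fun i _ => Finset.sum_congr rfl fun j _ => by ring
  have hterm (i j : ι) : IntegrableOn
      (fun s => a i * a j * (exp (-T⁻¹ * s) * (cos (s * ν i) * cos (s * ν j)))) (Set.Ioi 0) :=
    (integrableOn_exp_neg_mul_cos_mul_cos (inv_pos.mpr hT) _ _).const_mul _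
  have hint : IntegrableOn (fun s => exp (-T⁻¹ * s) * (∑ i ∈ S, a i * cos (s * ν i)) ^ 2)
      (Set.Ioi 0) := by
    simp_rw [hexpand]
    exact integrable_finsetSum _ fun i _ => integrable_finsetSum _ fun j _ => hterm i j
  refine (intervalIntegral_le_exp_one_mul_integral_exp_neg_mul hT (fun _ => sq_nonneg _)
    hint).trans ?_
  simp_rw [hexpand]
  rw [integral_finsetSum _ fun i _ => integrable_finsetSum _ fun j _ => hterm i j]
  gcongr with i hi
  rw [integral_finsetSum _ fun j _ => hterm i j]
  refine Finset.sum_le_sum fun j hj => ?_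
  rw [integral_const_mul]
  refine mul_le_mul_of_nonneg_left ?_ (mul_nonneg (ha i hi) (ha j hj))
  refine (integral_exp_neg_mul_cos_mul_cos_le (inv_pos.mpr hT) (hν i hi) (hν j hj)).trans_eq ?_
  field_simp

end CosineSums

section BrunSieve

variable {α : Type*}

lemma sum_powerset_card_le {M : Type*} [AddCommMonoid M] (s : Finset α) (k : ℕ) (f : ℕ → M) :
    ∑ D ∈ s.powerset with D.card ≤ k, f D.card =
      ∑ j ∈ Finset.range (k + 1), s.card.choose j • f j := by
  classical
  rw [← Finset.sum_fiberwise_of_maps_to (g := Finset.card) (t := Finset.range (k + 1))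
    fun D hD => Finset.mem_range_succ_iff.mpr (Finset.mem_filter.mp hD).2]
  refine Finset.sum_congr rfl fun j hj => ?_
  have hfiber : {D ∈ {D ∈ s.powerset | D.card ≤ k} | D.card = j} = s.powersetCard j := by
    rw [Finset.powersetCard_eq_filter, Finset.filter_filter]
    refine Finset.filter_congr fun D _ => ?_
    have := Finset.mem_range_succ_iff.mp hj
    lia
  rw [hfiber, Finset.sum_congr rfl fun D hD => by rw [(Finset.mem_powersetCard.mp hD).2],
    Finset.sum_const, Finset.card_powersetCard]

lemma card_powerset_card_le_le_pow (s : Finset α) (k : ℕ) :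
    ({D ∈ s.powerset | D.card ≤ k}).card ≤ (s.card + 1) ^ k := by
  rw [Finset.card_eq_sum_ones, sum_powerset_card_le s k fun _ => 1, add_pow]
  gcongr with j hj
  simp only [smul_eq_mul, mul_one, one_pow]
  exact (Nat.choose_le_pow _ _).trans
    (Nat.le_mul_of_pos_right _ (Nat.choose_pos (Finset.mem_range_succ_iff.mp hj)))

-- Bonferroni's inequality: an even truncation of inclusion-exclusion is an upper bound.
lemma indicator_empty_le_sum_powerset_card_le [DecidableEq α] (s : Finset α) (m : ℕ) :
    (if s = ∅ then 1 else 0 : ℝ) ≤ ∑ D ∈ s.powerset with D.card ≤ 2 * m, (-1) ^ D.card := by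
  rw [sum_powerset_card_le]
  split_ifs with hs
  · rw [hs, Finset.sum_range_succ']
    simp
  · obtain ⟨n, hn⟩ := Nat.exists_eq_succ_of_ne_zero (mt Finset.card_eq_zero.mp hs)
    have halt := Int.alternating_sum_range_choose_eq_choose (n := n) (m := 2 * m)
    rw [(even_two_mul m).neg_one_pow, one_mul] at halt
    have hsum : ∑ j ∈ Finset.range (2 * m + 1), s.card.choose j • (-1 : ℝ) ^ j =
        n.choose (2 * m) := by
      simp_rw [hn, nsmul_eq_mul, mul_comm (Nat.cast (R := ℝ) _)]
      exact_mod_cast halt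
    rw [hsum]
    positivity

-- Rankin's trick: a factor `2 ^ (D.card - k) ≥ 1` pays for the terms beyond the truncation.
lemma sum_powerset_card_le_prod_neg_le (s : Finset α) (k : ℕ) {x : α → ℝ} (hx : ∀ i, 0 ≤ x i) :
    ∑ D ∈ s.powerset with D.card ≤ k, ∏ i ∈ D, -x i ≤
      ∏ i ∈ s, (1 - x i) + (∏ i ∈ s, (1 + 2 * x i)) / 2 ^ k := by
  have htail : ∑ D ∈ s.powerset with ¬D.card ≤ k, -∏ i ∈ D, -x i ≤
      ∑ D ∈ s.powerset, (∏ i ∈ D, 2 * x i) / 2 ^ k := by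
    refine (Finset.sum_le_sum fun D hD => ?_).trans
      (Finset.sum_le_sum_of_subset_of_nonneg (Finset.filter_subset _ _) fun D _ _ =>
        div_nonneg (Finset.prod_nonneg fun i _ => mul_nonneg zero_le_two (hx i)) (by positivity))
    have hprod : 0 ≤ ∏ i ∈ D, x i := Finset.prod_nonneg fun i _ => hx i
    have hpow : (2 : ℝ) ^ k ≤ 2 ^ D.card :=
      pow_le_pow_right₀ one_le_two (not_le.mp (Finset.mem_filter.mp hD).2).le
    have hneg : -∏ i ∈ D, -x i ≤ ∏ i ∈ D, x i := by
      rw [Finset.prod_neg]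
      rcases neg_one_pow_eq_or ℝ D.card with h | h <;> rw [h] <;> linarith
    rw [Finset.prod_mul_distrib, Finset.prod_const, le_div_iff₀ (by positivity)]
    nlinarith [mul_le_mul_of_nonneg_right hpow hprod, pow_pos (two_pos (α := ℝ)) k]
  have hsplit := Finset.sum_filter_add_sum_filter_not s.powerset (fun D => D.card ≤ k)
    fun D => ∏ i ∈ D, -x i
  rw [← Finset.prod_one_add] at hsplit
  rw [← Finset.sum_div, ← Finset.prod_one_add, Finset.sum_neg_distrib] at htail
  simp_rw [sub_eq_add_neg]
  linarith

lemma abs_card_Ioc_filter_dvd_sub_le (a H d : ℕ) (hd : 0 < d) :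
    |(({n ∈ Finset.Ioc a (a + H) | d ∣ n}).card : ℝ) - H / d| ≤ 1 := by
  have hcard := Nat.Ioc_filter_modEq_card (a := a) (b := a + H) hd 0
  simp only [Nat.modEq_zero_iff_dvd, Nat.cast_zero, sub_zero, Nat.cast_add] at hcard
  have hmono : ⌊(a / d : ℚ)⌋ ≤ ⌊((a + H) / d : ℚ)⌋ := by
    gcongr
    exact le_add_of_nonneg_right (Nat.cast_nonneg H)
  rw [max_eq_left (sub_nonneg.mpr hmono)] at hcard
  have hcard' : (({n ∈ Finset.Ioc a (a + H) | d ∣ n}).card : ℚ) =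
      ⌊((a + H) / d : ℚ)⌋ - ⌊(a / d : ℚ)⌋ := by exact_mod_cast hcard
  have habs : |(({n ∈ Finset.Ioc a (a + H) | d ∣ n}).card : ℚ) - H / d| ≤ 1 := by
    have hlow := Int.floor_le (a / d : ℚ)
    have hup := Int.lt_floor_add_one (a / d : ℚ)
    have hlow' := Int.floor_le ((a + H) / d : ℚ)
    have hup' := Int.lt_floor_add_one ((a + H) / d : ℚ)
    rw [add_div] at hlow' hup'
    rw [hcard', abs_le, add_div]
    constructor <;> linarith
  have := (Rat.cast_le (K := ℝ)).mpr habs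
  push_cast at this
  exact this

lemma sum_powerset_filter_dvd {P : Finset ℕ} (hP : ∀ p ∈ P, p.Prime) (A : Finset ℕ) (k : ℕ) :
    ∑ n ∈ A, ∑ D ∈ {p ∈ P | p ∣ n}.powerset with D.card ≤ k, (-1 : ℝ) ^ D.card =
      ∑ D ∈ P.powerset with D.card ≤ k,
        (-1) ^ D.card * (({n ∈ A | ∏ p ∈ D, p ∣ n}).card : ℝ) := by
  have hmem (n : ℕ) (D : Finset ℕ) : D ⊆ {p ∈ P | p ∣ n} ↔ D ⊆ P ∧ ∏ p ∈ D, p ∣ n := by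
    simp only [Finset.subset_iff, Finset.mem_filter]
    refine ⟨fun h => ⟨fun p hp => (h hp).1, Finset.prod_primes_dvd n
      (fun p hp => (hP p (h hp).1).prime) fun p hp => (h hp).2⟩,
      fun h p hp => ⟨h.1 hp, (Finset.dvd_prod_of_mem _ hp).trans h.2⟩⟩
  have hcomm := Finset.sum_comm' (s := A)
    (t := fun n => {D ∈ {p ∈ P | p ∣ n}.powerset | D.card ≤ k})
    (t' := {D ∈ P.powerset | D.card ≤ k}) (s' := fun D => {n ∈ A | ∏ p ∈ D, p ∣ n})
    (f := fun _ D => (-1 : ℝ) ^ D.card) fun n D => by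
      simp only [Finset.mem_filter, Finset.mem_powerset, hmem]
      tauto
  rw [hcomm]
  refine Finset.sum_congr rfl fun D _ => ?_
  rw [Finset.sum_const, nsmul_eq_mul, mul_comm]

lemma card_Ioc_filter_not_dvd_le {P : Finset ℕ} (hP : ∀ p ∈ P, p.Prime) (a H m : ℕ) :
    (({n ∈ Finset.Ioc a (a + H) | ∀ p ∈ P, ¬p ∣ n}).card : ℝ) ≤
      H * (∏ p ∈ P, (1 - 1 / (p : ℝ)) + (∏ p ∈ P, (1 + 2 * (1 / (p : ℝ)))) / 2 ^ (2 * m)) +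
        (P.card + 1) ^ (2 * m) := by
  have hterm : ∀ D ∈ {D ∈ P.powerset | D.card ≤ 2 * m},
      (-1) ^ D.card * (({n ∈ Finset.Ioc a (a + H) | ∏ p ∈ D, p ∣ n}).card : ℝ) ≤
        H * (∏ p ∈ D, -(1 / (p : ℝ))) + 1 := fun D hD => by
    have hD' := Finset.mem_powerset.mp (Finset.mem_filter.mp hD).1
    have hcount := abs_le.mp (abs_card_Ioc_filter_dvd_sub_le a H (∏ p ∈ D, p)
      (Finset.prod_pos fun p hp => (hP p (hD' hp)).pos))
    rw [Finset.prod_neg, Finset.prod_div_distrib, Finset.prod_const_one, ← Nat.cast_prod,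
      mul_left_comm, mul_one_div]
    rcases neg_one_pow_eq_or ℝ D.card with h | h <;> rw [h] <;> linarith
  calc (({n ∈ Finset.Ioc a (a + H) | ∀ p ∈ P, ¬p ∣ n}).card : ℝ)
      = ∑ n ∈ Finset.Ioc a (a + H), if {p ∈ P | p ∣ n} = ∅ then 1 else 0 := by
        simp [Finset.filter_eq_empty_iff]
    _ ≤ ∑ n ∈ Finset.Ioc a (a + H),
          ∑ D ∈ {p ∈ P | p ∣ n}.powerset with D.card ≤ 2 * m, (-1 : ℝ) ^ D.card :=
        Finset.sum_le_sum fun n _ => indicator_empty_le_sum_powerset_card_le _ m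
    _ ≤ ∑ D ∈ P.powerset with D.card ≤ 2 * m, (H * (∏ p ∈ D, -(1 / (p : ℝ))) + 1) := by
        rw [sum_powerset_filter_dvd hP]
        exact Finset.sum_le_sum hterm
    _ = H * (∑ D ∈ P.powerset with D.card ≤ 2 * m, ∏ p ∈ D, -(1 / (p : ℝ))) +
          ({D ∈ P.powerset | D.card ≤ 2 * m}).card := by
        rw [Finset.sum_add_distrib, Finset.mul_sum, Finset.sum_const, nsmul_one]
    _ ≤ _ := by
        gcongr
        · exact sum_powerset_card_le_prod_neg_le P _ fun p => by positivity
        · exact_mod_cast card_powerset_card_le_le_pow P (2 * m)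

lemma log_le_prod_primesBelow (n : ℕ) : log n ≤ ∏ p ∈ n.primesBelow, (1 - 1 / (p : ℝ))⁻¹ := by
  rcases Nat.eq_zero_or_pos n with rfl | hn
  · simp
  let f : ℕ →* ℝ := (invMonoidHom : ℝ →* ℝ).comp (Nat.castRingHom ℝ : ℕ →* ℝ)
  have hf {p : ℕ} (hp : p.Prime) : ‖f p‖ < 1 := by
    simpa [f] using inv_lt_one_of_one_lt₀ (Nat.one_lt_cast.mpr hp.one_lt)
  have hsum := (EulerProduct.summable_and_hasSum_smoothNumbers_prod_primesBelow_geometric hf n).2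
  have hsmooth : ∀ i ∈ Finset.Icc 1 (n - 1), i ∈ n.smoothNumbers := fun i hi => by
    rw [Finset.mem_Icc] at hi
    exact Nat.mem_smoothNumbers_of_lt hi.1 (by lia)
  calc log n ≤ ∑ i ∈ Finset.Icc 1 (n - 1), (i : ℝ)⁻¹ := by
        have := log_add_one_le_harmonic (n - 1)
        rw [Nat.sub_add_cancel hn, harmonic_eq_sum_Icc] at this
        push_cast at this
        exact this
    _ = ∑ i ∈ (Finset.Icc 1 (n - 1)).subtype (· ∈ n.smoothNumbers), f i :=
        (Finset.sum_subtype_of_mem (fun i : ℕ => (i : ℝ)⁻¹) hsmooth).symm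
    _ ≤ ∏ p ∈ n.primesBelow, (1 - f p)⁻¹ :=
        sum_le_hasSum _ (fun i _ => by simp [f]) hsum
    _ = _ := by simp [f]

lemma sum_primesBelow_one_div_le (n : ℕ) : ∑ p ∈ n.primesBelow, 1 / (p : ℝ) ≤ 1 + log n := by
  have hharm := harmonic_le_one_add_log n
  rw [harmonic_eq_sum_Icc] at hharm
  push_cast at hharm
  simp_rw [one_div]
  refine (Finset.sum_le_sum_of_subset_of_nonneg (fun p hp => ?_) fun _ _ _ => by positivity).trans
    hharm
  have := Nat.mem_primesBelow.mp hp
  exact Finset.mem_Icc.mpr ⟨this.2.one_lt.le, this.1.le⟩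

lemma prod_primesBelow_one_add_two_mul_le {n : ℕ} (hn : 0 < n) :
    ∏ p ∈ n.primesBelow, (1 + 2 * (1 / (p : ℝ))) ≤ 8 * n ^ 2 := by
  have hn' : (0 : ℝ) < n := Nat.cast_pos.mpr hn
  have hexp : exp 1 ^ 2 ≤ 8 := by nlinarith [exp_one_lt_d9, exp_pos 1]
  calc ∏ p ∈ n.primesBelow, (1 + 2 * (1 / (p : ℝ)))
      ≤ exp (∑ p ∈ n.primesBelow, 2 * (1 / (p : ℝ))) :=
        prod_one_add_le_exp_sum _ fun p => by positivity
    _ ≤ exp (2 * (1 + log n)) := by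
        rw [← Finset.mul_sum]
        gcongr
        exact sum_primesBelow_one_div_le n
    _ = exp 1 ^ 2 * n ^ 2 := by
        rw [mul_comm, exp_mul, exp_add, exp_log hn', rpow_two, mul_pow]
    _ ≤ 8 * n ^ 2 := by gcongr

lemma card_primesBelow_add_one_le {n : ℕ} (hn : 0 < n) : n.primesBelow.card + 1 ≤ n := by
  have hsub : n.primesBelow ⊆ Finset.Ico 1 n := fun p hp =>
    have hp' := Nat.mem_primesBelow.mp hp
    Finset.mem_Ico.mpr ⟨hp'.2.one_lt.le, hp'.1⟩
  have := Finset.card_le_card hsub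
  rw [Nat.card_Ico] at this
  lia

lemma card_Ioc_filter_prime_le_add_card {P : Finset ℕ} (hP : ∀ p ∈ P, p.Prime) (a b : ℕ) :
    ({n ∈ Finset.Ioc a b | n.Prime}).card ≤
      ({n ∈ Finset.Ioc a b | ∀ p ∈ P, ¬p ∣ n}).card + P.card := by
  refine (Finset.card_le_card fun n hn => ?_).trans (Finset.card_union_le _ _)
  rw [Finset.mem_filter] at hn
  by_cases hnP : n ∈ P
  · exact Finset.mem_union_right _ hnP
  · refine Finset.mem_union_left _ (Finset.mem_filter.mpr ⟨hn.1, fun p hp hpn => hnP ?_⟩)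
    rwa [← (Nat.prime_dvd_prime_iff_eq (hP p hp) hn.2).mp hpn]

lemma prod_primesBelow_two_pow_one_sub_le {r : ℕ} (hr : 0 < r) :
    ∏ p ∈ (2 ^ r : ℕ).primesBelow, (1 - 1 / (p : ℝ)) ≤ 2 / r := by
  have hlog := log_le_prod_primesBelow (2 ^ r)
  rw [Finset.prod_inv_distrib, Nat.cast_pow, log_pow, Nat.cast_two] at hlog
  have hlow : (r : ℝ) / 2 ≤ r * log 2 := by
    linarith [mul_le_mul_of_nonneg_left log_two_gt_d9.le (Nat.cast_nonneg (α := ℝ) r)]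
  simpa using inv_anti₀ (by positivity) (hlow.trans hlog)

lemma prod_primesBelow_two_pow_one_add_two_mul_div_le {r : ℕ} (hr : 0 < r) :
    (∏ p ∈ (2 ^ r : ℕ).primesBelow, (1 + 2 * (1 / (p : ℝ)))) / 2 ^ (2 * (2 * r)) ≤ 2 / r := by
  have hprod := prod_primesBelow_one_add_two_mul_le (n := 2 ^ r) (by positivity)
  have hr4 : (4 * r : ℝ) ≤ 4 ^ r := by
    obtain ⟨k, rfl⟩ := Nat.exists_eq_add_of_le' hr
    rw [pow_succ']
    gcongr
    exact_mod_cast Nat.succ_le_of_lt (Nat.lt_pow_self (by norm_num : 1 < 4))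
  have hsplit : (2 : ℝ) ^ (2 * (2 * r)) = 4 ^ r * 4 ^ r := by
    rw [pow_mul, show (2 : ℝ) ^ 2 = 4 by norm_num, two_mul, pow_add]
  have hcast : (((2 ^ r : ℕ) : ℝ)) ^ 2 = 4 ^ r := by
    rw [Nat.cast_pow, ← pow_mul, mul_comm, pow_mul]
    norm_num
  rw [hcast] at hprod
  rw [hsplit, div_le_div_iff₀ (by positivity) (Nat.cast_pos.mpr hr)]
  nlinarith [mul_le_mul_of_nonneg_right hprod (Nat.cast_nonneg (α := ℝ) r),
    pow_pos (zero_lt_four (α := ℝ)) r]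

lemma card_primes_Ioc_le_of_two_pow_le (a : ℕ) {H r : ℕ} (hr : 0 < r) (hH : 2 ^ (5 * r ^ 2) ≤ H) :
    (({n ∈ Finset.Ioc a (a + H) | n.Prime}).card : ℝ) ≤ 6 * H / r := by
  set P := (2 ^ r).primesBelow
  have hP : ∀ p ∈ P, p.Prime := fun p hp => (Nat.mem_primesBelow.mp hp).2
  have hPcard : P.card + 1 ≤ 2 ^ r := card_primesBelow_add_one_le (by positivity)
  have herr : ((P.card : ℝ) + 1) ^ (2 * (2 * r)) ≤ H / r := by
    have hpow : (P.card + 1) ^ (2 * (2 * r)) * r ≤ H := calc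
      (P.card + 1) ^ (2 * (2 * r)) * r ≤ (2 ^ r) ^ (2 * (2 * r)) * 2 ^ r ^ 2 := by
          gcongr
          exact Nat.lt_two_pow_self.le.trans
            (Nat.pow_le_pow_right zero_lt_two (Nat.le_self_pow two_ne_zero r))
      _ = 2 ^ (5 * r ^ 2) := by rw [← pow_mul, ← pow_add]; ring_nf
      _ ≤ H := hH
    rw [le_div_iff₀ (Nat.cast_pos.mpr hr)]
    exact_mod_cast hpow
  have hsmall : (P.card : ℝ) ≤ H / r :=
    (le_add_of_nonneg_right zero_le_one).trans
      ((le_self_pow₀ (le_add_of_nonneg_left (Nat.cast_nonneg _)) (by lia)).trans herr)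
  have hcount : (({n ∈ Finset.Ioc a (a + H) | n.Prime}).card : ℝ) ≤
      ({n ∈ Finset.Ioc a (a + H) | ∀ p ∈ P, ¬p ∣ n}).card + P.card := by
    exact_mod_cast card_Ioc_filter_prime_le_add_card hP a (a + H)
  calc (({n ∈ Finset.Ioc a (a + H) | n.Prime}).card : ℝ)
      ≤ H * (2 / r + 2 / r) + H / r + H / r := by
        refine hcount.trans (add_le_add ((card_Ioc_filter_not_dvd_le hP a H (2 * r)).trans ?_)
          hsmall)
        exact add_le_add (mul_le_mul_of_nonneg_left
          (add_le_add (prod_primesBelow_two_pow_one_sub_le hr)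
            (prod_primesBelow_two_pow_one_add_two_mul_div_le hr)) (Nat.cast_nonneg H)) herr
    _ = 6 * H / r := by ring

lemma card_primes_Ioc_le (a : ℕ) {H : ℕ} (hH : 1 < H) :
    (({n ∈ Finset.Ioc a (a + H) | n.Prime}).card : ℝ) ≤ 36 * H / √(log H) := by
  have hlog : 0 < log H := log_pos (Nat.one_lt_cast.mpr hH)
  have hH0 : (0 : ℝ) < H := by positivity
  have hfloor := Nat.lt_floor_add_one (√(log H) / 3)
  have hfloor' := Nat.floor_le (a := √(log H) / 3) (by positivity)
  set r := ⌊√(log H) / 3⌋₊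
  rw [le_div_iff₀ (sqrt_pos.mpr hlog)]
  rcases Nat.eq_zero_or_pos r with hr | hr
  · rw [hr, Nat.cast_zero, zero_add] at hfloor
    have hcard : (({n ∈ Finset.Ioc a (a + H) | n.Prime}).card : ℝ) ≤ H := by
      exact_mod_cast (Finset.card_filter_le _ _).trans (by simp)
    nlinarith [sqrt_nonneg (log H)]
  · have hr1 : (1 : ℝ) ≤ r := Nat.one_le_cast.mpr hr
    have hpow : 2 ^ (5 * r ^ 2) ≤ H := by
      have hr2 : (5 * r ^ 2 : ℝ) ≤ log H := by
        nlinarith [sq_sqrt hlog.le, sqrt_nonneg (log H)]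
      have hlog2 : (5 * r ^ 2 : ℝ) * log 2 ≤ log H :=
        (mul_le_of_le_one_right (by positivity) (by linarith [log_two_lt_d9])).trans hr2
      rw [← Nat.cast_le (α := ℝ), ← log_le_log_iff (by positivity) hH0]
      push_cast
      rw [log_pow]
      exact_mod_cast hlog2
    have hcard := card_primes_Ioc_le_of_two_pow_le a hr hpow
    calc _ ≤ 6 * H / r * √(log H) := by gcongr
      _ ≤ 6 * H / r * (6 * r) := by gcongr; linarith
      _ = 36 * H := by field_simp; norm_num

end BrunSieve

section ShortIntervals

lemma mem_Ioc_ceil_of_mem_Ico {y h : ℝ} (hy : 0 < y) {q : ℕ} (hq : (q : ℝ) ∈ Set.Ico y (y + h)) :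
    q ∈ Finset.Ioc (⌈y⌉₊ - 1) (⌈y⌉₊ - 1 + ⌈h⌉₊) := by
  have hlow : ⌈y⌉₊ ≤ q := Nat.ceil_le.mpr hq.1
  have hup : (q : ℝ) < (⌈y⌉₊ + ⌈h⌉₊ : ℕ) := by
    push_cast
    linarith [hq.2, Nat.le_ceil y, Nat.le_ceil h]
  have hpos : 0 < ⌈y⌉₊ := Nat.ceil_pos.mpr hy
  have := Nat.cast_lt.mp hup
  exact Finset.mem_Ioc.mpr ⟨by lia, by lia⟩

lemma sum_one_div_le_card_div {y : ℝ} (hy : 0 < y) {Q : Finset ℕ} (hQ : ∀ q ∈ Q, y ≤ q) :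
    ∑ q ∈ Q, 1 / (q : ℝ) ≤ Q.card / y := by
  rw [div_eq_mul_one_div, ← nsmul_eq_mul]
  exact Finset.sum_le_card_nsmul _ _ _ fun q hq => one_div_le_one_div_of_le hy (hQ q hq)

lemma sum_one_div_le_of_mem_Ico {y h : ℝ} (hy : 0 < y) (hh : 0 ≤ h) {Q : Finset ℕ}
    (hQ : ∀ q ∈ Q, (q : ℝ) ∈ Set.Ico y (y + h)) :
    ∑ q ∈ Q, 1 / (q : ℝ) ≤ (h + 1) / y := by
  refine (sum_one_div_le_card_div hy fun q hq => (hQ q hq).1).trans ?_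
  have hcard := Finset.card_le_card fun q hq => mem_Ioc_ceil_of_mem_Ico hy (hQ q hq)
  rw [Nat.card_Ioc, Nat.add_sub_cancel_left] at hcard
  gcongr
  exact (Nat.cast_le.mpr hcard).trans (Nat.ceil_lt_add_one hh).le

lemma sum_primes_one_div_le_of_mem_Ico {y h : ℝ} (hy : 0 < y) (hh : 1 < h) {Q : Finset ℕ}
    (hQp : ∀ q ∈ Q, q.Prime) (hQ : ∀ q ∈ Q, (q : ℝ) ∈ Set.Ico y (y + h)) :
    ∑ q ∈ Q, 1 / (q : ℝ) ≤ 72 * h / √(log h) / y := by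
  refine (sum_one_div_le_card_div hy fun q hq => (hQ q hq).1).trans ?_
  have hsub := Finset.card_le_card fun q hq => Finset.mem_filter.mpr
    ⟨mem_Ioc_ceil_of_mem_Ico hy (hQ q hq), hQp q hq⟩
  have hceil := Nat.le_ceil h
  have hceil' := Nat.ceil_lt_add_one (zero_le_one.trans hh.le)
  gcongr
  calc (Q.card : ℝ) ≤ 36 * ⌈h⌉₊ / √(log ⌈h⌉₊) :=
        (Nat.cast_le.mpr hsub).trans (card_primes_Ioc_le _ (Nat.one_lt_cast.mp (hh.trans_le hceil)))
    _ ≤ 72 * h / √(log h) := by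
        have := log_pos hh
        gcongr ?_ / √(log ?_)
        linarith

lemma sum_one_div_one_add_sq_le (J : Finset ℕ) : ∑ j ∈ J, 1 / (1 + (j : ℝ) ^ 2) ≤ 3 := by
  have hsingle : HasSum (fun j : ℕ => if j = 0 then (1 : ℝ) else 0) 1 := hasSum_ite_eq 0 1
  calc ∑ j ∈ J, 1 / (1 + (j : ℝ) ^ 2)
      ≤ ∑ j ∈ J, ((if j = 0 then 1 else 0) + 1 / (j : ℝ) ^ 2) := by
        refine Finset.sum_le_sum fun j _ => ?_
        rcases Nat.eq_zero_or_pos j with rfl | hj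
        · simp
        · rw [if_neg hj.ne', zero_add]
          gcongr
          linarith
    _ ≤ 1 + π ^ 2 / 6 := sum_le_hasSum J (fun j _ => by positivity) (hsingle.add hasSum_zeta_two)
    _ ≤ 3 := by nlinarith [pi_lt_d2, pi_pos]

lemma sum_mul_one_div_one_add_sq_le {ι : Type*} {S : Finset ι} {w u : ι → ℝ} {B : ℝ}
    (hw : ∀ i ∈ S, 0 ≤ w i) (hu : ∀ i ∈ S, 0 ≤ u i)
    (hB : ∀ j : ℕ, ∑ i ∈ S with ⌊u i⌋₊ = j, w i ≤ B) :
    ∑ i ∈ S, w i * (1 / (1 + u i ^ 2)) ≤ 3 * B := by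
  classical
  have hB0 : 0 ≤ B :=
    (Finset.sum_nonneg fun i hi => hw i (Finset.mem_of_mem_filter i hi)).trans (hB 0)
  calc ∑ i ∈ S, w i * (1 / (1 + u i ^ 2))
      ≤ ∑ i ∈ S, w i * (1 / (1 + (⌊u i⌋₊ : ℝ) ^ 2)) := by
        gcongr with i hi
        · exact hw i hi
        · exact Nat.floor_le (hu i hi)
    _ = ∑ j ∈ S.image fun i => ⌊u i⌋₊,
          (∑ i ∈ S with ⌊u i⌋₊ = j, w i) * (1 / (1 + (j : ℝ) ^ 2)) := by
        rw [← Finset.sum_fiberwise_of_maps_to fun i hi =>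
          Finset.mem_image_of_mem (fun i => ⌊u i⌋₊) hi]
        refine Finset.sum_congr rfl fun j _ => ?_
        rw [Finset.sum_mul]
        exact Finset.sum_congr rfl fun i hi => by rw [(Finset.mem_filter.mp hi).2]
    _ ≤ ∑ j ∈ S.image fun i => ⌊u i⌋₊, B * (1 / (1 + (j : ℝ) ^ 2)) := by
        gcongr with j
        exact hB j
    _ ≤ 3 * B := by
        rw [← Finset.mul_sum, mul_comm]
        gcongr
        exact sum_one_div_one_add_sq_le _

lemma exp_one_div_le {T : ℝ} (hT : 1 ≤ T) : exp (1 / T) ≤ 1 + 2 / T := by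
  have hT0 : 0 ≤ 1 / T := by positivity
  have habs := abs_exp_sub_one_le (x := 1 / T) (by
    rw [abs_of_nonneg hT0]
    exact div_le_one_of_le₀ hT (by positivity))
  rw [abs_of_nonneg hT0] at habs
  linarith [(abs_le.mp habs).2, mul_one_div 2 T]

lemma mem_Ico_of_floor_mul_log_sub_log_eq {T x y : ℝ} (hT : 1 ≤ T) (hx : 0 < x) (hxy : x ≤ y)
    {j : ℕ} (hj : ⌊T * (log y - log x)⌋₊ = j) :
    y ∈ Set.Ico (x * exp (j / T)) (x * exp (j / T) + 2 * (x * exp (j / T)) / T) := by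
  have hT0 : 0 < T := by linarith
  have hlog : 0 ≤ log y - log x := sub_nonneg.mpr (log_le_log hx hxy)
  obtain ⟨hlow, hup⟩ := (Nat.floor_eq_iff (mul_nonneg hT0.le hlog)).mp hj
  have hy : y = x * exp (log y - log x) := by
    rw [exp_sub, exp_log hx, exp_log (hx.trans_le hxy), mul_div_cancel₀ _ hx.ne']
  rw [mul_comm] at hlow hup
  refine ⟨?_, ?_⟩
  · rw [hy]
    gcongr
    exact (div_le_iff₀ hT0).mpr hlow
  · calc y = x * exp (log y - log x) := hy
      _ < x * exp (j / T + 1 / T) := by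
          gcongr
          rw [← add_div]
          exact (lt_div_iff₀ hT0).mpr hup
      _ ≤ x * exp (j / T) * (1 + 2 / T) := by
          rw [exp_add, ← mul_assoc]
          gcongr
          exact exp_one_div_le hT
      _ = _ := by ring

lemma mul_sum_one_div_mul_kernel_le {T x : ℝ} (hT : 1 ≤ T) (hx : 0 < x) {Q : Finset ℕ}
    (hQ : ∀ q ∈ Q, x ≤ q) :
    T * ∑ q ∈ Q, 1 / (q : ℝ) * (1 / (1 + (T * (log q - log x)) ^ 2)) ≤ 3 * (2 + T / x) := by
  have hT0 : 0 < T := by linarith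
  have hwindow (j : ℕ) : ∑ q ∈ Q with ⌊T * (log ((q : ℕ) : ℝ) - log x)⌋₊ = j, 1 / (q : ℝ) ≤
      2 / T + 1 / x := by
    refine (sum_one_div_le_of_mem_Ico (y := x * exp (j / T)) (h := 2 * (x * exp (j / T)) / T)
      (by positivity) (by positivity) fun q hq => mem_Ico_of_floor_mul_log_sub_log_eq hT hx
        (hQ q (Finset.mem_filter.mp hq).1) (Finset.mem_filter.mp hq).2).trans ?_
    have hle : x ≤ x * exp (j / T) := le_mul_of_one_le_right hx.le (one_le_exp (by positivity))
    calc _ = 2 / T + 1 / (x * exp (j / T)) := by field_simp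
      _ ≤ 2 / T + 1 / x := by gcongr
  have hsum := sum_mul_one_div_one_add_sq_le (fun q _ => by positivity)
    (fun q hq => mul_nonneg hT0.le (sub_nonneg.mpr (log_le_log hx (hQ q hq)))) hwindow
  calc _ ≤ T * (3 * (2 / T + 1 / x)) := by gcongr
    _ = 3 * (2 + T / x) := by field_simp

lemma sum_primes_one_div_le_of_mem_Ico_two_mul_div {T x y : ℝ} (hT : 0 < T) (hx : 1 < x)
    (hTx : T ^ 2 ≤ x) (hxy : x ≤ y) {Q : Finset ℕ} (hQp : ∀ q ∈ Q, q.Prime)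
    (hQ : ∀ q ∈ Q, (q : ℝ) ∈ Set.Ico y (y + 2 * y / T)) :
    ∑ q ∈ Q, 1 / (q : ℝ) ≤ 288 / (T * √(log x)) := by
  have hx0 : 0 < x := by linarith
  have hy : 0 < y := hx0.trans_le hxy
  have hlogx : 0 < log x := log_pos hx
  have hlen : √x ≤ 2 * y / T := by
    rw [le_div_iff₀ hT]
    nlinarith [le_sqrt_of_sq_le hTx, sqrt_nonneg x, sq_sqrt hx0.le]
  have hlen1 : 1 < 2 * y / T := (lt_sqrt_of_sq_lt (by simpa using hx)).trans_le hlen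
  have hlog : √(log x) / 2 ≤ √(log (2 * y / T)) := by
    refine le_sqrt_of_sq_le ?_
    rw [div_pow, sq_sqrt hlogx.le]
    have := log_le_log (sqrt_pos.mpr hx0) hlen
    rw [log_sqrt hx0.le] at this
    linarith
  calc ∑ q ∈ Q, 1 / (q : ℝ) ≤ 72 * (2 * y / T) / √(log (2 * y / T)) / y :=
        sum_primes_one_div_le_of_mem_Ico hy hlen1 hQp hQ
    _ ≤ 72 * (2 * y / T) / (√(log x) / 2) / y := by gcongr
    _ = 288 / (T * √(log x)) := by field_simp; norm_num

lemma mul_sum_primes_one_div_mul_kernel_le {T x : ℝ} (hT : 1 ≤ T) (hx : 1 < x) (hTx : T ^ 2 ≤ x)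
    {Q : Finset ℕ} (hQp : ∀ q ∈ Q, q.Prime) (hQ : ∀ q ∈ Q, x ≤ q) :
    T * ∑ q ∈ Q, 1 / (q : ℝ) * (1 / (1 + (T * (log q - log x)) ^ 2)) ≤ 864 / √(log x) := by
  have hT0 : 0 < T := by linarith
  have hx0 : 0 < x := by linarith
  have hwindow (j : ℕ) : ∑ q ∈ Q with ⌊T * (log ((q : ℕ) : ℝ) - log x)⌋₊ = j, 1 / (q : ℝ) ≤
      288 / (T * √(log x)) :=
    sum_primes_one_div_le_of_mem_Ico_two_mul_div hT0 hx hTx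
      (le_mul_of_one_le_right hx0.le (one_le_exp (by positivity)))
      (fun q hq => hQp q (Finset.mem_filter.mp hq).1)
      fun q hq => mem_Ico_of_floor_mul_log_sub_log_eq hT hx0 (hQ q (Finset.mem_filter.mp hq).1)
        (Finset.mem_filter.mp hq).2
  have hsum := sum_mul_one_div_one_add_sq_le (fun q _ => by positivity)
    (fun q hq => mul_nonneg hT0.le (sub_nonneg.mpr (log_le_log hx0 (hQ q hq)))) hwindow
  calc _ ≤ T * (3 * (288 / (T * √(log x)))) := by gcongr
    _ = 864 / √(log x) := by field_simp; norm_num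

end ShortIntervals

section PrimeSums

lemma mul_card_filter_log_two_eq_le {Q : Finset ℕ} (hQ : ∀ q ∈ Q, q.Prime) (k : ℕ) :
    k * {q ∈ Q | Nat.log 2 q = k}.card ≤ 4 * 2 ^ k := by
  set R := {q ∈ Q | Nat.log 2 q = k}
  have hRQ : ∀ q ∈ R, q.Prime ∧ Nat.log 2 q = k := fun q hq =>
    (Finset.mem_filter.mp hq).imp_left (hQ q)
  have hpow : (2 ^ k) ^ R.card ≤ 4 ^ 2 ^ (k + 1) := calc
    (2 ^ k) ^ R.card ≤ ∏ q ∈ R, q := Finset.pow_card_le_prod _ _ _ fun q hq => by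
      rw [← (hRQ q hq).2]
      exact Nat.pow_log_le_self 2 (hRQ q hq).1.ne_zero
    _ ≤ primorial (2 ^ (k + 1)) := Finset.prod_le_prod_of_subset_of_one_le'
      (fun q hq => Finset.mem_filter.mpr ⟨Finset.mem_range_succ_iff.mpr <| by
        rw [← (hRQ q hq).2]
        exact (Nat.lt_pow_succ_log_self one_lt_two q).le, (hRQ q hq).1⟩)
      fun q hq _ => (Finset.mem_filter.mp hq).2.one_lt.le
    _ ≤ 4 ^ 2 ^ (k + 1) := primorial_le_four_pow _
  rw [← pow_mul, show 4 = 2 ^ 2 from rfl, ← pow_mul, Nat.pow_le_pow_iff_right one_lt_two,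
    pow_succ] at hpow
  lia

lemma sum_filter_log_two_eq_one_div_mul_one_div_sqrt_log_le {Q : Finset ℕ}
    (hQ : ∀ q ∈ Q, q.Prime) (k : ℕ) :
    ∑ q ∈ Q with Nat.log 2 q = k, 1 / (q : ℝ) * (1 / √(log q)) ≤
      8 * (1 / (k : ℝ) ^ (3 / 2 : ℝ)) := by
  rcases Nat.eq_zero_or_pos k with rfl | hk
  · rw [Finset.sum_eq_zero fun q hq => ?_]
    · positivity
    · obtain ⟨hqQ, hq⟩ := Finset.mem_filter.mp hq
      exact absurd hq (Nat.log_pos one_lt_two (hQ q hqQ).two_le).ne'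
  have hk0 : (0 : ℝ) < k := Nat.cast_pos.mpr hk
  have hrpow : (k : ℝ) ^ (3 / 2 : ℝ) = k * √k := by
    rw [show (3 / 2 : ℝ) = 1 + 1 / 2 by norm_num, rpow_add hk0, rpow_one, sqrt_eq_rpow]
  have hterm : ∀ q ∈ Q.filter (Nat.log 2 · = k),
      1 / (q : ℝ) * (1 / √(log q)) ≤ 1 / 2 ^ k * (1 / (√k / 2)) := fun q hq => by
    obtain ⟨hqQ, hq⟩ := Finset.mem_filter.mp hq
    have hpow : (2 : ℝ) ^ k ≤ q := by
      rw [← hq]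
      exact_mod_cast Nat.pow_log_le_self 2 (hQ q hqQ).ne_zero
    have hlog : √k / 2 ≤ √(log q) := by
      refine le_sqrt_of_sq_le ?_
      rw [div_pow, sq_sqrt hk0.le]
      have := log_le_log (by positivity) hpow
      rw [log_pow] at this
      nlinarith [log_two_gt_d9]
    gcongr
  have hcard : (k : ℝ) * (Q.filter (Nat.log 2 · = k)).card ≤ 4 * 2 ^ k := by
    exact_mod_cast mul_card_filter_log_two_eq_le hQ k
  calc _ ≤ _ := Finset.sum_le_card_nsmul _ _ _ hterm
    _ = k * (Q.filter (Nat.log 2 · = k)).card * (2 / (k * 2 ^ k * √k)) := by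
        rw [nsmul_eq_mul]
        field_simp
    _ ≤ 4 * 2 ^ k * (2 / (k * 2 ^ k * √k)) := by gcongr
    _ = 8 * (1 / (k : ℝ) ^ (3 / 2 : ℝ)) := by
        rw [hrpow]
        field_simp
        norm_num

lemma exists_sum_primes_one_div_mul_one_div_sqrt_log_le :
    ∃ C, 0 ≤ C ∧ ∀ Q : Finset ℕ, (∀ q ∈ Q, q.Prime) →
      ∑ q ∈ Q, 1 / (q : ℝ) * (1 / √(log q)) ≤ C := by
  have hsum : Summable fun k : ℕ => 8 * (1 / (k : ℝ) ^ (3 / 2 : ℝ)) :=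
    (summable_one_div_nat_rpow.mpr (by norm_num)).mul_left 8
  refine ⟨∑' k : ℕ, 8 * (1 / (k : ℝ) ^ (3 / 2 : ℝ)), tsum_nonneg fun k => by positivity,
    fun Q hQ => ?_⟩
  rw [← Finset.sum_fiberwise_of_maps_to fun q hq => Finset.mem_image_of_mem (Nat.log 2) hq]
  exact (Finset.sum_le_sum fun k _ =>
    sum_filter_log_two_eq_one_div_mul_one_div_sqrt_log_le hQ k).trans
    (hsum.sum_le_tsum _ fun k _ => by positivity)

lemma sum_one_div_le_one_add_log {x : ℝ} (hx : 1 ≤ x) {Q : Finset ℕ}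
    (hQ : ∀ q ∈ Q, 0 < q ∧ (q : ℝ) ≤ x) : ∑ q ∈ Q, 1 / (q : ℝ) ≤ 1 + log x := by
  refine le_trans ?_ (harmonic_floor_le_one_add_log x hx)
  rw [harmonic_eq_sum_Icc]
  push_cast
  simp only [one_div]
  exact Finset.sum_le_sum_of_subset_of_nonneg
    (fun q hq => Finset.mem_Icc.mpr ⟨(hQ q hq).1, Nat.le_floor (hQ q hq).2⟩)
    fun _ _ _ => by positivity

lemma sum_one_div_sq_le_one_div {M : ℕ} (hM : M ≠ 0) {Q : Finset ℕ} (hQ : ∀ q ∈ Q, M < q) :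
    ∑ q ∈ Q, 1 / (q : ℝ) ^ 2 ≤ 1 / (M : ℝ) := by
  have hsub : Q ⊆ Finset.Ioc M (M + Q.sup id) := fun q hq =>
    Finset.mem_Ioc.mpr ⟨hQ q hq, le_add_left (Finset.le_sup (f := id) hq)⟩
  simp only [one_div]
  refine (Finset.sum_le_sum_of_subset_of_nonneg hsub fun _ _ _ => by positivity).trans ?_
  exact (sum_Ioc_inv_sq_le_sub hM (Nat.le_add_right _ _)).trans
    (sub_le_self _ (by positivity))

lemma sum_sum_le_two_mul_sum_sum_filter_le {ι : Type*} [LinearOrder ι] (S : Finset ι)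
    {f : ι → ι → ℝ} (hf : ∀ i j, 0 ≤ f i j) (hsymm : ∀ i j, f i j = f j i) :
    ∑ i ∈ S, ∑ j ∈ S, f i j ≤ 2 * ∑ i ∈ S, ∑ j ∈ S with i ≤ j, f i j := by
  calc ∑ i ∈ S, ∑ j ∈ S, f i j
      ≤ ∑ i ∈ S, ∑ j ∈ S, ((if i ≤ j then f i j else 0) + if j ≤ i then f j i else 0) := by
        gcongr with i _ j _
        have := hf i j
        rcases le_total i j with h | h
        · rw [if_pos h]
          split_ifs <;> linarith [hf j i]
        · rw [if_pos h, hsymm j i]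
          split_ifs <;> linarith
    _ = 2 * ∑ i ∈ S, ∑ j ∈ S with i ≤ j, f i j := by
        simp_rw [Finset.sum_add_distrib, Finset.sum_filter]
        rw [Finset.sum_comm (f := fun i j => if j ≤ i then f j i else 0), two_mul]

lemma mul_sum_primes_one_div_mul_kernel_le_add {T : ℝ} (hT : 1 ≤ T) {p : ℕ} (hp : p.Prime)
    {Q : Finset ℕ} (hQp : ∀ q ∈ Q, q.Prime) (hQ : ∀ q ∈ Q, p ≤ q) :
    T * ∑ q ∈ Q, 1 / (q : ℝ) * (1 / (1 + (T * (log q - log p)) ^ 2)) ≤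
      (if (p : ℝ) ≤ T ^ 2 then 6 else 0) + 3 * T / p + 864 / √(log p) := by
  have hQ' : ∀ q ∈ Q, (p : ℝ) ≤ q := fun q hq => Nat.cast_le.mpr (hQ q hq)
  split_ifs with hpT
  · refine (mul_sum_one_div_mul_kernel_le hT (Nat.cast_pos.mpr hp.pos) hQ').trans ?_
    have : 0 ≤ 864 / √(log p) := by positivity
    linear_combination this
  · refine (mul_sum_primes_one_div_mul_kernel_le hT (Nat.one_lt_cast.mpr hp.one_lt)
      (not_le.mp hpT).le hQp hQ').trans ?_
    rw [zero_add]
    exact le_add_of_nonneg_left (by positivity)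

lemma exists_sum_sum_primes_one_div_mul_kernel_le :
    ∃ C, ∀ T : ℝ, 1 ≤ T → ∀ M : ℕ, M ≠ 0 → ∀ Q : Finset ℕ, (∀ q ∈ Q, q.Prime ∧ M < q) →
      ∑ p ∈ Q, ∑ q ∈ Q, 1 / (p : ℝ) * (1 / (q : ℝ)) * (T / (1 + (T * (log q - log p)) ^ 2)) ≤
        C * (T / M + 1 + log T) := by
  obtain ⟨C, hC, hC_le⟩ := exists_sum_primes_one_div_mul_one_div_sqrt_log_le
  refine ⟨2 * (12 + 864 * C), fun T hT M hM Q hQ => ?_⟩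
  have : 0 < T := by linarith
  have hlogT : 0 ≤ log T := log_nonneg hT
  have hsmall : ∑ p ∈ Q with ((p : ℕ) : ℝ) ≤ T ^ 2, 1 / (p : ℝ) ≤ 1 + 2 * log T := by
    refine (sum_one_div_le_one_add_log (x := T ^ 2) (one_le_pow₀ hT) fun q hq => ?_).trans_eq
      (by rw [log_pow, Nat.cast_ofNat])
    exact (Finset.mem_filter.mp hq).imp_left fun h => (hQ q h).1.pos
  have hinner (p : ℕ) (hp : p ∈ Q) : ∑ q ∈ Q with p ≤ q,
      1 / (p : ℝ) * (1 / (q : ℝ)) * (T / (1 + (T * (log q - log p)) ^ 2)) ≤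
        6 * (if (p : ℝ) ≤ T ^ 2 then 1 / (p : ℝ) else 0) + 3 * T * (1 / (p : ℝ) ^ 2) +
          864 * (1 / (p : ℝ) * (1 / √(log p))) := by
    calc _ = 1 / (p : ℝ) * (T * ∑ q ∈ Q with p ≤ q,
            1 / (q : ℝ) * (1 / (1 + (T * (log q - log p)) ^ 2))) := by
          simp only [Finset.mul_sum]
          exact Finset.sum_congr rfl fun q _ => by ring
      _ ≤ 1 / (p : ℝ) * ((if (p : ℝ) ≤ T ^ 2 then 6 else 0) + 3 * T / p + 864 / √(log p)) := by
          gcongr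
          exact mul_sum_primes_one_div_mul_kernel_le_add hT (hQ p hp).1
            (fun q hq => (hQ q (Finset.mem_filter.mp hq).1).1)
            fun q hq => (Finset.mem_filter.mp hq).2
      _ = _ := by split_ifs <;> ring
  calc _ ≤ 2 * ∑ p ∈ Q, ∑ q ∈ Q with p ≤ q,
          1 / (p : ℝ) * (1 / (q : ℝ)) * (T / (1 + (T * (log q - log p)) ^ 2)) :=
        sum_sum_le_two_mul_sum_sum_filter_le Q (fun _ _ => by positivity) fun _ _ => by ring
    _ ≤ 2 * (6 * (1 + 2 * log T) + 3 * T * (1 / M) + 864 * C) := by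
        refine mul_le_mul_of_nonneg_left ((Finset.sum_le_sum hinner).trans ?_) zero_le_two
        simp only [Finset.sum_add_distrib, ← Finset.mul_sum, ← Finset.sum_filter]
        gcongr
        · exact sum_one_div_sq_le_one_div hM fun q hq => (hQ q hq).2
        · exact hC_le Q fun q hq => (hQ q hq).1
    _ ≤ 2 * (12 + 864 * C) * (T / M + 1 + log T) := by
        have h₁ : 0 ≤ T / M := by positivity
        have h₂ : 0 ≤ C * (T / M + log T) := by positivity
        rw [mul_one_div, mul_div_assoc]
        linarith only [h₁, h₂]

lemma exists_integral_sq_sum_primes_cos_div_le :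
    ∃ C, ∀ T : ℝ, 1 ≤ T → ∀ M : ℕ, M ≠ 0 → ∀ Q : Finset ℕ, (∀ q ∈ Q, q.Prime ∧ M < q) →
      ∫ s in (0 : ℝ)..T, (∑ q ∈ Q, cos (s * log q) / q) ^ 2 ≤ C * (T / M + 1 + log T) := by
  obtain ⟨C, hC_le⟩ := exists_sum_sum_primes_one_div_mul_kernel_le
  refine ⟨exp 1 * C, fun T hT M hM Q hQ => ?_⟩
  simp only [div_eq_inv_mul (cos _), ← one_div]
  refine (integral_sq_sum_cos_le (by linarith) Q (fun q _ => by positivity)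
    fun q _ => log_natCast_nonneg q).trans ?_
  rw [mul_assoc]
  gcongr
  exact hC_le T hT M hM Q hQ

end PrimeSums

section MeanSquare

/-- The mean square of `f` over `[0, T]`. -/
noncomputable def meanSq (f : ℝ → ℝ) (T : ℝ) : ℝ :=
  (1 / T) * ∫ s in (0 : ℝ)..T, f s ^ 2

lemma meanSq_nonneg (f : ℝ → ℝ) {T : ℝ} (hT : 0 ≤ T) : 0 ≤ meanSq f T :=
  mul_nonneg (by positivity) (intervalIntegral.integral_nonneg hT fun _ _ => sq_nonneg _)

variable {f g : ℝ → ℝ} {T : ℝ}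

lemma sqrt_meanSq (hT : 0 ≤ T) (hf : AEStronglyMeasurable f (volume.restrict (Set.Ioc 0 T))) :
    √(meanSq f T) = lpNorm f 2 (volume.restrict (Set.Ioc 0 T)) / √T := by
  rw [lpNorm_eq_integral_norm_rpow_toReal two_ne_zero ENNReal.ofNat_ne_top hf, meanSq,
    intervalIntegral.integral_of_le hT, one_div_mul_eq_div, sqrt_div' _ hT, sqrt_eq_rpow]
  simp

lemma abs_sqrt_meanSq_sub_sqrt_meanSq_le (hT : 0 ≤ T)
    (hf : MemLp f 2 (volume.restrict (Set.Ioc 0 T)))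
    (hg : MemLp g 2 (volume.restrict (Set.Ioc 0 T))) :
    |√(meanSq f T) - √(meanSq g T)| ≤ √(meanSq (f - g) T) := by
  rw [sqrt_meanSq hT hf.1, sqrt_meanSq hT hg.1, sqrt_meanSq hT (hf.sub hg).1, ← sub_div, abs_div,
    abs_of_nonneg (sqrt_nonneg T)]
  gcongr
  rw [abs_sub_le_iff, sub_le_iff_le_add', sub_le_iff_le_add']
  exact ⟨lpNorm_le_lpNorm_add_lpNorm_sub' hg one_le_two,
    lpNorm_le_lpNorm_add_lpNorm_sub hf one_le_two⟩

variable {ι : Type*} {l : Filter ι}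

lemma memLp_two_and_meanSq_le_of_tendsto [l.NeBot] [l.IsCountablyGenerated] {F : ι → ℝ → ℝ}
    {K : ℝ} (hT : 0 < T) (hF : ∀ i, MemLp (F i) 2 (volume.restrict (Set.Ioc 0 T)))
    (hlim : ∀ s ∈ Set.Ioc 0 T, Tendsto (F · s) l (nhds (f s)))
    (hK : ∀ᶠ i in l, meanSq (F i) T ≤ K) :
    MemLp f 2 (volume.restrict (Set.Ioc 0 T)) ∧ meanSq f T ≤ K := by
  have hae : ∀ᵐ s ∂volume.restrict (Set.Ioc 0 T), Tendsto (F · s) l (nhds (f s)) :=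
    ae_restrict_of_forall_mem measurableSet_Ioc hlim
  have hK0 : 0 ≤ K := by
    obtain ⟨i, hi⟩ := hK.exists
    exact (meanSq_nonneg _ hT.le).trans hi
  have hmeas : AEStronglyMeasurable f (volume.restrict (Set.Ioc 0 T)) :=
    aestronglyMeasurable_of_tendsto_ae l (fun i => (hF i).1) hae
  have hnorm : eLpNorm f 2 (volume.restrict (Set.Ioc 0 T)) ≤ ENNReal.ofReal (√K * √T) := by
    refine Lp.eLpNorm_le_of_ae_tendsto (hK.mono fun i hi => ?_) (fun i => (hF i).1) hae
    rw [← ofReal_lpNorm (hF i)]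
    refine ENNReal.ofReal_le_ofReal ?_
    rw [← div_le_iff₀ (sqrt_pos.mpr hT), ← sqrt_meanSq hT.le (hF i).1]
    exact sqrt_le_sqrt hi
  have hmem : MemLp f 2 (volume.restrict (Set.Ioc 0 T)) :=
    ⟨hmeas, hnorm.trans_lt ENNReal.ofReal_lt_top⟩
  refine ⟨hmem, (sqrt_le_sqrt_iff hK0).mp ?_⟩
  rw [sqrt_meanSq hT.le hmeas, div_le_iff₀ (sqrt_pos.mpr hT)]
  rwa [← ofReal_lpNorm hmem, ENNReal.ofReal_le_ofReal_iff (by positivity)] at hnorm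

lemma tendsto_meanSq_of_tendsto_meanSq_sub [l.NeBot] {F : ι → ℝ → ℝ} {m : ι → ℝ} {L : ℝ}
    (hf : ∀ᶠ T in atTop, MemLp f 2 (volume.restrict (Set.Ioc 0 T)))
    (hF : ∀ i T, MemLp (F i) 2 (volume.restrict (Set.Ioc 0 T)))
    (hsub : Tendsto (fun x : ι × ℝ => meanSq (f - F x.1) x.2) (l ×ˢ atTop) (nhds 0))
    (hm : ∀ᶠ i in l, Tendsto (meanSq (F i)) atTop (nhds (m i)))
    (hL : Tendsto m l (nhds L)) :
    Tendsto (meanSq f) atTop (nhds L) := by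
  have hunif : TendstoUniformlyOnFilter (fun i T => √(meanSq (F i) T))
      (fun T => √(meanSq f T)) l atTop := by
    have hsqrt := hsub.sqrt
    rw [sqrt_zero] at hsqrt
    refine Metric.tendstoUniformlyOnFilter_iff.mpr fun ε hε => ?_
    filter_upwards [hsqrt.eventually_lt_const hε, tendsto_snd.eventually hf,
      tendsto_snd.eventually (eventually_ge_atTop 0)] with x hx hfx hT
    exact (abs_sqrt_meanSq_sub_sqrt_meanSq_le hT hfx (hF _ _)).trans_lt hx
  have hlim := (hunif.tendsto_of_eventually_tendsto (hm.mono fun i hi => hi.sqrt) hL.sqrt).pow 2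
  have hmnn : 0 ≤ L := by
    refine ge_of_tendsto hL (hm.mono fun i hi => ?_)
    exact ge_of_tendsto hi ((eventually_ge_atTop 0).mono fun T hT => meanSq_nonneg _ hT)
  rw [sq_sqrt hmnn] at hlim
  exact hlim.congr' ((eventually_ge_atTop 0).mono fun T hT => sq_sqrt (meanSq_nonneg f hT))

end MeanSquare

section PrimesUpTo

lemma mem_primesUpTo {t : ℝ} {p : ℕ} : p ∈ primesUpTo t ↔ p.Prime ∧ (p : ℝ) ≤ t := by
  rw [primesUpTo, Finset.mem_filter, Finset.mem_range_succ_iff, and_comm]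
  exact and_congr_right fun hp => Nat.le_floor_iff' hp.ne_zero

lemma primesUpTo_mono : Monotone primesUpTo := fun _ _ hst _ hp =>
  mem_primesUpTo.mpr ((mem_primesUpTo.mp hp).imp_right hst.trans')

lemma mem_primesUpTo_sdiff {t u : ℝ} {p : ℕ} :
    p ∈ primesUpTo u \ primesUpTo t ↔ p.Prime ∧ t < p ∧ (p : ℝ) ≤ u := by
  rw [Finset.mem_sdiff, mem_primesUpTo, mem_primesUpTo, ← not_le]
  tauto

lemma mem_subtype_primesUpTo {t : ℝ} {p : Nat.Primes} :
    p ∈ ((primesUpTo t).subtype Nat.Prime : Finset Nat.Primes) ↔ ((p : ℕ) : ℝ) ≤ t :=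
  Finset.mem_subtype.trans (mem_primesUpTo.trans (and_iff_right p.2))

lemma sum_subtype_primesUpTo (t : ℝ) :
    ∑ p ∈ ((primesUpTo t).subtype Nat.Prime : Finset Nat.Primes), 1 / ((p : ℕ) : ℝ) ^ 2 =
      ∑ p ∈ primesUpTo t, 1 / (p : ℝ) ^ 2 :=
  Finset.sum_subtype_of_mem (fun p : ℕ => 1 / (p : ℝ) ^ 2) fun _ hp => (mem_primesUpTo.mp hp).1

lemma tsum_indicator_compl {α : Type*} {f : α → ℝ} (hf : Summable f) (S : Finset α) :
    ∑' a, (S : Set α)ᶜ.indicator f a = ∑' a, f a - ∑ a ∈ S, f a := by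
  rw [← tsum_subtype, ← hf.sum_add_tsum_compl (s := S), add_sub_cancel_left]

lemma summable_primes_one_div_sq : Summable fun p : Nat.Primes => 1 / ((p : ℕ) : ℝ) ^ 2 :=
  (summable_one_div_nat_pow.mpr one_lt_two).subtype _

lemma tailSum_eq (t : ℝ) : tailSum t =
    ((∑' p : Nat.Primes, 1 / ((p : ℕ) : ℝ) ^ 2) - ∑ p ∈ primesUpTo t, 1 / (p : ℝ) ^ 2) / 2 := by
  obtain ⟨S, hS, hsum⟩ : ∃ S : Finset Nat.Primes, (∀ p, p ∈ S ↔ ((p : ℕ) : ℝ) ≤ t) ∧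
      ∑ p ∈ S, 1 / ((p : ℕ) : ℝ) ^ 2 = ∑ p ∈ primesUpTo t, 1 / (p : ℝ) ^ 2 :=
    ⟨_, fun _ => mem_subtype_primesUpTo, sum_subtype_primesUpTo t⟩
  have htail : (∑' p : Nat.Primes, if t < ((p : ℕ) : ℝ) then 1 / ((p : ℕ) : ℝ) ^ 2 else 0) =
      ∑' p, (S : Set Nat.Primes)ᶜ.indicator (fun p => 1 / ((p : ℕ) : ℝ) ^ 2) p :=
    tsum_congr fun p => by
      simp only [Set.indicator, Set.mem_compl_iff, Finset.mem_coe, hS, not_le]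
  rw [tailSum, htail, tsum_indicator_compl summable_primes_one_div_sq, hsum]
  ring

lemma tendsto_tailSum : Tendsto tailSum atTop (nhds 0) := by
  have hsum : Tendsto (fun t => ∑ p ∈ primesUpTo t, 1 / (p : ℝ) ^ 2) atTop
      (nhds (∑' p : Nat.Primes, 1 / ((p : ℕ) : ℝ) ^ 2)) := by
    simp_rw [← sum_subtype_primesUpTo]
    refine summable_primes_one_div_sq.hasSum.comp (tendsto_atTop_finset_of_monotone
      (fun s t hst => Finset.subtype_mono (primesUpTo_mono hst)) fun p => ⟨(p : ℕ), ?_⟩)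
    exact mem_subtype_primesUpTo.mpr le_rfl
  rw [funext tailSum_eq]
  have hlim := (hsum.const_sub (∑' p : Nat.Primes, 1 / ((p : ℕ) : ℝ) ^ 2)).div_const 2
  rwa [sub_self, zero_div] at hlim

lemma half_mul_sum_primesUpTo_sdiff {t u : ℝ} (htu : t ≤ u) :
    1 / 2 * ∑ p ∈ primesUpTo u \ primesUpTo t, 1 / (p : ℝ) ^ 2 = tailSum t - tailSum u := by
  rw [tailSum_eq, tailSum_eq, ← Finset.sum_sdiff (primesUpTo_mono htu)]
  ring

end PrimesUpTo

section PrimeCosSum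

/-- The sum of `cos (s log p) / p` over `p ∈ S`. For a set `S` of primes this is the real part of
the partial sum over `S` of the prime zeta function at `1 + i s`. -/
noncomputable def primeCosSum (S : Finset ℕ) (s : ℝ) : ℝ :=
  ∑ p ∈ S, cos (s * log p) / p

lemma continuous_primeCosSum (S : Finset ℕ) : Continuous (primeCosSum S) := by
  unfold primeCosSum
  fun_prop

lemma memLp_primeCosSum (S : Finset ℕ) (T : ℝ) :
    MemLp (primeCosSum S) 2 (volume.restrict (Set.Ioc 0 T)) :=
  (memLp_two_iff_integrable_sq (continuous_primeCosSum S).aestronglyMeasurable).mpr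
    ((continuous_primeCosSum S).pow 2).integrableOn_Ioc

lemma primeCosSum_sub_primeCosSum {S S' : Finset ℕ} (h : S ⊆ S') :
    primeCosSum S' - primeCosSum S = primeCosSum (S' \ S) := by
  ext s
  exact sub_eq_of_eq_add (Finset.sum_sdiff h).symm

lemma tendsto_meanSq_primeCosSum {S : Finset ℕ} (hS : ∀ p ∈ S, p.Prime) :
    Tendsto (meanSq (primeCosSum S)) atTop (nhds (1 / 2 * ∑ p ∈ S, 1 / (p : ℝ) ^ 2)) := by
  have hlim := tendsto_mean_sq_sum_cos S (fun p => 1 / (p : ℝ)) (ν := fun p => log p)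
    (fun p hp => log_pos (Nat.one_lt_cast.mpr (hS p hp).one_lt)) fun p hp q hq h =>
      Nat.cast_injective (log_injOn_pos (Set.mem_Ioi.mpr (Nat.cast_pos.mpr (hS p hp).pos))
        (Set.mem_Ioi.mpr (Nat.cast_pos.mpr (hS q hq).pos)) h)
  unfold meanSq primeCosSum
  simpa only [one_div_pow, one_div_mul_eq_div] using hlim

lemma exists_meanSq_primeCosSum_le :
    ∃ C, ∀ T : ℝ, 1 ≤ T → ∀ M : ℕ, M ≠ 0 → ∀ S : Finset ℕ, (∀ p ∈ S, p.Prime ∧ M < p) →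
      meanSq (primeCosSum S) T ≤ C * (1 / M + 1 / T + log T / T) := by
  obtain ⟨C, hC_le⟩ := exists_integral_sq_sum_primes_cos_div_le
  refine ⟨C, fun T hT M hM S hS => ?_⟩
  have : 0 < T := by linarith
  calc meanSq (primeCosSum S) T ≤ 1 / T * (C * (T / M + 1 + log T)) := by
        unfold meanSq
        gcongr
        exact hC_le T hT M hM S hS
    _ = C * (1 / M + 1 / T + log T / T) := by field_simp

variable {F : ℝ → ℝ}

lemma exists_memLp_and_meanSq_sub_primeCosSum_le
    (hF : ∀ s, s ≠ 0 → Tendsto (fun u => primeCosSum (primesUpTo u) s) atTop (nhds (F s))) :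
    ∃ C, ∀ T : ℝ, 1 ≤ T → ∀ M : ℕ, M ≠ 0 →
      MemLp (F - primeCosSum (primesUpTo M)) 2 (volume.restrict (Set.Ioc 0 T)) ∧
        meanSq (F - primeCosSum (primesUpTo M)) T ≤ C * (1 / M + 1 / T + log T / T) := by
  obtain ⟨C, hC_le⟩ := exists_meanSq_primeCosSum_le
  refine ⟨C, fun T hT M hM => memLp_two_and_meanSq_le_of_tendsto (l := atTop)
    (F := fun u : ℝ => primeCosSum (primesUpTo u) - primeCosSum (primesUpTo M))
    (by linarith) (fun u => (memLp_primeCosSum _ T).sub (memLp_primeCosSum _ T))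
    (fun s hs => (hF s hs.1.ne').sub_const _) ?_⟩
  filter_upwards [eventually_ge_atTop (M : ℝ)] with u hu
  rw [primeCosSum_sub_primeCosSum (primesUpTo_mono hu)]
  exact hC_le T hT M hM _ fun p hp => (mem_primesUpTo_sdiff.mp hp).imp_right fun h =>
    Nat.cast_lt.mp h.1

lemma memLp_of_tendsto_primeCosSum
    (hF : ∀ s, s ≠ 0 → Tendsto (fun u => primeCosSum (primesUpTo u) s) atTop (nhds (F s)))
    {T : ℝ} (hT : 1 ≤ T) : MemLp F 2 (volume.restrict (Set.Ioc 0 T)) := by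
  obtain ⟨C, hC⟩ := exists_memLp_and_meanSq_sub_primeCosSum_le hF
  simpa using (hC T hT 1 one_ne_zero).1.add (memLp_primeCosSum (primesUpTo (1 : ℕ)) T)

lemma tendsto_meanSq_sub_primeCosSum_nhds_zero
    (hF : ∀ s, s ≠ 0 → Tendsto (fun u => primeCosSum (primesUpTo u) s) atTop (nhds (F s))) :
    Tendsto (fun x : ℕ × ℝ => meanSq (F - primeCosSum (primesUpTo x.1)) x.2)
      (atTop ×ˢ atTop) (nhds 0) := by
  obtain ⟨C, hC⟩ := exists_memLp_and_meanSq_sub_primeCosSum_le hF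
  have hbound : Tendsto (fun x : ℕ × ℝ => C * (1 / (x.1 : ℝ) + 1 / x.2 + log x.2 / x.2))
      (atTop ×ˢ atTop) (nhds 0) := by
    have hM := (tendsto_one_div_atTop_nhds_zero_nat (𝕜 := ℝ)).comp
      (tendsto_fst (f := atTop) (g := (atTop : Filter ℝ)))
    have hT : Tendsto (fun T : ℝ => 1 / T + log T / T) atTop (nhds (0 + 0)) :=
      (tendsto_const_nhds.div_atTop tendsto_id).add isLittleO_log_id_atTop.tendsto_div_nhds_zero
    simpa [add_assoc] using (hM.add (hT.comp tendsto_snd)).const_mul C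
  refine squeeze_zero' ?_ ?_ hbound
  · filter_upwards [tendsto_snd.eventually (eventually_ge_atTop 0)] with x hx
    exact meanSq_nonneg _ hx
  · filter_upwards [tendsto_fst.eventually (eventually_ne_atTop 0),
      tendsto_snd.eventually (eventually_ge_atTop 1)] with x hM hT
    exact (hC x.2 hT x.1 hM).2

lemma tendsto_meanSq_sub_primeCosSum
    (hF : ∀ s, s ≠ 0 → Tendsto (fun u => primeCosSum (primesUpTo u) s) atTop (nhds (F s)))
    (t : ℝ) : Tendsto (meanSq (F - primeCosSum (primesUpTo t))) atTop (nhds (tailSum t)) := by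
  refine tendsto_meanSq_of_tendsto_meanSq_sub (l := (atTop : Filter ℕ))
    (F := fun M => primeCosSum (primesUpTo M) - primeCosSum (primesUpTo t))
    (m := fun M => tailSum t - tailSum M) ?_
    (fun M T => (memLp_primeCosSum _ T).sub (memLp_primeCosSum _ T)) ?_ ?_ ?_
  · filter_upwards [eventually_ge_atTop 1] with T hT
    exact (memLp_of_tendsto_primeCosSum hF hT).sub (memLp_primeCosSum _ T)
  · simpa only [sub_sub_sub_cancel_right] using tendsto_meanSq_sub_primeCosSum_nhds_zero hF
  · filter_upwards [tendsto_natCast_atTop_atTop.eventually_ge_atTop t] with M hM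
    rw [primeCosSum_sub_primeCosSum (primesUpTo_mono hM), ← half_mul_sum_primesUpTo_sdiff hM]
    exact tendsto_meanSq_primeCosSum fun p hp => (mem_primesUpTo_sdiff.mp hp).1
  · simpa using (tendsto_tailSum.comp tendsto_natCast_atTop_atTop).const_sub (tailSum t)

end PrimeCosSum

theorem stmt10 (t : ℝ) (ht : 0 < t) (F : ℝ → ℝ)
    (hF : ∀ Δ : ℝ, Δ ≠ 0 →
      Tendsto (fun u : ℝ => ∑ p ∈ primesUpTo u, Real.cos (Δ * Real.log p) / p)
        atTop (nhds (F Δ))) :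
    Tendsto
      (fun T : ℝ => (1 / T) *
        ∫ Δ in (0:ℝ)..T, (∑ p ∈ primesUpTo t, Real.cos (Δ * Real.log p) / p - F Δ) ^ 2)
      atTop (nhds (tailSum t)) ∧
    tailSum t =
      ((∑' p : Nat.Primes, 1 / ((p : ℕ) : ℝ) ^ 2) - ∑ p ∈ primesUpTo t, 1 / (p : ℝ) ^ 2) / 2 ∧
    Tendsto tailSum atTop (nhds 0) := by
  refine ⟨?_, tailSum_eq t, tendsto_tailSum⟩
  simp_rw [sub_sq_comm _ (F _)]
  exact tendsto_meanSq_sub_primeCosSum hF t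
end

section
/- ∑_{n=2}^∞ (ζ(n) − 1)/n = 1 − γ, where ζ is the Riemann zeta function (so ζ(n) = ∑_{k=1}^∞ k^{-n} for integers n ≥ 2) and γ is the Euler–Mascheroni constant. -/
/-!
Expand `ζ(n) - 1 = ∑_{k ≥ 2} k⁻ⁿ` and interchange the two summations, all terms being nonnegative.
For fixed `k` the sum over `n` is the logarithm series without its linear term, with value
`log k - log (k - 1) - 1 / k`, and summing these differences over `k ≥ 2` gives
`lim (log N - (H_N - 1)) = 1 - γ`.
-/

theorem hasSum_comm_of_nonneg {α β : Type*} {f : α → β → ℝ} {g : α → ℝ} {h : β → ℝ} {a : ℝ}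
    (hf : ∀ x y, 0 ≤ f x y) (hrow : ∀ x, HasSum (f x) (g x)) (hg : HasSum g a)
    (hcol : ∀ y, HasSum (fun x ↦ f x y) (h y)) : HasSum h a := by
  have hsummable : Summable fun p : α × β ↦ f p.1 p.2 :=
    (summable_prod_of_nonneg fun p ↦ hf p.1 p.2).mpr
      ⟨fun x ↦ (hrow x).summable, by simpa only [(hrow _).tsum_eq] using hg.summable⟩
  have htotal : HasSum (fun p : α × β ↦ f p.1 p.2) a := by
    simpa only [(hsummable.hasSum.prod_fiberwise hrow).unique hg] using hsummable.hasSum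
  exact ((Equiv.prodComm β α).hasSum_iff.mpr htotal).prod_fiberwise hcol

theorem hasSum_pow_add_two_div {x : ℝ} (hx : |x| < 1) :
    HasSum (fun n : ℕ ↦ x ^ (n + 2) / ((n : ℝ) + 2)) (-Real.log (1 - x) - x) := by
  have h := (hasSum_nat_add_iff' 1).mpr (Real.hasSum_pow_div_log_of_abs_lt_one hx)
  simpa [add_assoc, one_add_one_eq_two] using h

theorem hasSum_inv_pow_add_two_div {y : ℝ} (hy : 1 < y) :
    HasSum (fun n : ℕ ↦ y⁻¹ ^ (n + 2) / ((n : ℝ) + 2))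
      (Real.log y - Real.log (y - 1) - y⁻¹) := by
  have hy₀ : 0 < y := one_pos.trans hy
  have hlt : |y⁻¹| < 1 := by
    rw [abs_of_pos (inv_pos.mpr hy₀)]
    exact inv_lt_one_of_one_lt₀ hy
  have hlog : -Real.log (1 - y⁻¹) = Real.log y - Real.log (y - 1) := by
    rw [← one_div, one_sub_div hy₀.ne', Real.log_div (sub_pos.mpr hy).ne' hy₀.ne', neg_sub]
  simpa only [hlog] using hasSum_pow_add_two_div hlt

theorem hasSum_log_add_two_sub_log_add_one_sub_inv :
    HasSum (fun k : ℕ ↦ Real.log (k + 2) - Real.log (k + 1) - ((k : ℝ) + 2)⁻¹)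
      (1 - Real.eulerMascheroniConstant) := by
  simpa [ZetaAsymptotics.term_one, add_assoc, one_add_one_eq_two] using
    ZetaAsymptotics.term_tsum_one

theorem hasSum_one_div_nat_add_two_cpow {s : ℂ} (hs : 1 < s.re) :
    HasSum (fun k : ℕ ↦ 1 / ((k : ℂ) + 2) ^ s) (riemannZeta s - 1) := by
  have hs₀ : s ≠ 0 := Complex.ne_zero_of_one_lt_re hs
  have hzeta : HasSum (fun k : ℕ ↦ 1 / (k : ℂ) ^ s) (riemannZeta s) := by
    rw [zeta_eq_tsum_one_div_nat_cpow hs]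
    exact (Complex.summable_one_div_nat_cpow.mpr hs).hasSum
  simpa [Finset.sum_range_succ, hs₀] using (hasSum_nat_add_iff' 2).mpr hzeta

theorem hasSum_inv_nat_add_two_pow {m : ℕ} (hm : 1 < m) :
    HasSum (fun k : ℕ ↦ ((k : ℝ) + 2)⁻¹ ^ m) ((riemannZeta m).re - 1) := by
  have h := hasSum_one_div_nat_add_two_cpow (s := m) (by simpa using hm)
  have hcast (k : ℕ) : 1 / ((k : ℂ) + 2) ^ (m : ℂ) = (((k : ℝ) + 2)⁻¹ ^ m : ℝ) := by
    push_cast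
    rw [Complex.cpow_natCast, one_div, inv_pow]
  simpa only [hcast, Complex.ofReal_re, Complex.sub_re, Complex.one_re] using Complex.hasSum_re h

theorem hasSum_riemannZeta_sub_one_div :
    HasSum (fun n : ℕ ↦ ((riemannZeta ((n : ℂ) + 2)).re - 1) / ((n : ℝ) + 2))
      (1 - Real.eulerMascheroniConstant) := by
  refine hasSum_comm_of_nonneg (f := fun k n : ℕ ↦ ((k : ℝ) + 2)⁻¹ ^ (n + 2) / ((n : ℝ) + 2))
    (fun k n ↦ by positivity) (fun k ↦ ?_) hasSum_log_add_two_sub_log_add_one_sub_inv fun n ↦ ?_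
  · have hk : (1 : ℝ) < k + 2 := by linarith [k.cast_nonneg (α := ℝ)]
    have hpred : (k : ℝ) + 2 - 1 = k + 1 := by ring
    simpa only [hpred] using hasSum_inv_pow_add_two_div hk
  · have h := hasSum_inv_nat_add_two_pow (m := n + 2) (by omega)
    simpa only [Nat.cast_add, Nat.cast_ofNat] using h.div_const ((n : ℝ) + 2)

theorem stmt13 :
    ∑' n : ℕ, ((riemannZeta ((n : ℂ) + 2)).re - 1) / ((n : ℝ) + 2) =
      1 - Real.eulerMascheroniConstant :=
  hasSum_riemannZeta_sub_one_div.tsum_eq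
end

section
/- ∫_0^∞ ( 1/(e^x − 1) − 1/(x e^x) ) dx = γ, where γ is the Euler–Mascheroni constant. -/
/-!
Put `k x = 1 / (1 - e⁻ˣ) - 1 / x` and `J a = ∫₀^∞ e⁻ᵃˣ k x dx`; the integral in question is `J 1`.
Multiplying `k` by `1 - e⁻ˣ` cancels its first denominator, and Frullani's integral then gives
`J a - J (a + 1) = 1 / a - (log (a + 1) - log a)`. Since `0 ≤ k ≤ 1` on `(0, ∞)`, we have
`0 ≤ J a ≤ 1 / a`, hence `J a → 0` as `a → ∞`, and telescoping identifies `J 1` with the limit of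
`H_n - log (n + 1)`.
-/

open Real Set Filter Topology MeasureTheory

section Frullani

variable {a b x : ℝ}

lemma integral_exp_neg_mul_Ioi_zero (ha : 0 < a) : ∫ x in Ioi 0, exp (-a * x) = a⁻¹ := by
  rw [integral_exp_mul_Ioi (neg_lt_zero.2 ha), mul_zero, exp_zero, neg_div_neg_eq, one_div]

lemma inv_mul_exp_sub_exp_mem_Icc (hab : a ≤ b) (hx : 0 < x) :
    x⁻¹ * (exp (-a * x) - exp (-b * x)) ∈ Icc 0 ((b - a) * exp (-a * x)) := by
  have hfactor : exp (-b * x) = exp (-a * x) * exp (-((b - a) * x)) := by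
    rw [← exp_add]
    ring_nf
  have hlower : 1 - (b - a) * x ≤ exp (-((b - a) * x)) := one_sub_le_exp_neg _
  have hmono : exp (-b * x) ≤ exp (-a * x) := exp_le_exp.2 (by nlinarith)
  refine ⟨mul_nonneg (inv_nonneg.2 hx.le) (sub_nonneg.2 hmono), ?_⟩
  rw [inv_mul_le_iff₀ hx, hfactor]
  nlinarith [exp_pos (-a * x)]

lemma integrableOn_inv_mul_exp_sub_exp (ha : 0 < a) (hb : 0 < b) :
    IntegrableOn (fun x ↦ x⁻¹ * (exp (-a * x) - exp (-b * x))) (Ioi 0) := by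
  wlog hab : a ≤ b generalizing a b
  · exact (this hb ha (le_of_not_ge hab)).neg.congr_fun
      (fun x _ ↦ by simp only [Pi.neg_apply]; ring) measurableSet_Ioi
  refine ((exp_neg_integrableOn_Ioi 0 ha).const_mul (b - a)).mono'
    (Measurable.aestronglyMeasurable (by fun_prop)) ?_
  filter_upwards [ae_restrict_mem measurableSet_Ioi] with x hx
  obtain ⟨hnonneg, hle⟩ := inv_mul_exp_sub_exp_mem_Icc hab hx
  rwa [norm_of_nonneg hnonneg]

lemma integral_inv_mul_exp_sub_exp (ha : 0 < a) (hb : 0 < b) :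
    ∫ x in Ioi 0, x⁻¹ * (exp (-a * x) - exp (-b * x)) = log b - log a := by
  have hcont : Continuous fun x : ℝ ↦ exp (-x) := by fun_prop
  have hzero : Tendsto (fun x : ℝ ↦ exp (-x)) (𝓝[>] 0) (𝓝 1) := by
    simpa using (hcont.tendsto 0).mono_left nhdsWithin_le_nhds
  have hfrullani := Frullani.integral_Ioi_eq (hcont.locallyIntegrable.locallyIntegrableOn _) ha hb
    hzero tendsto_exp_neg_atTop_nhds_zero
    (by simpa only [smul_eq_mul, neg_mul] using integrableOn_inv_mul_exp_sub_exp ha hb)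
  simpa [log_div hb.ne' ha.ne'] using hfrullani

end Frullani

/-- The kernel `1 / (1 - e⁻ˣ) - 1 / x` of Gauss's integral for the digamma function. -/
noncomputable def digammaKernel (x : ℝ) : ℝ := (1 - exp (-x))⁻¹ - x⁻¹

/-- The Laplace transform of `digammaKernel`. By Gauss's formula, its value at `a > 0` is
`log a - ψ a`, where `ψ` is the digamma function. -/
noncomputable def digammaKernelLaplace (a : ℝ) : ℝ :=
  ∫ x in Ioi 0, exp (-a * x) * digammaKernel x

section DigammaKernel

variable {a x : ℝ}

lemma digammaKernel_mem_Icc (hx : 0 < x) : digammaKernel x ∈ Icc 0 1 := by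
  have hpos : 0 < 1 - exp (-x) := sub_pos.2 (exp_lt_one_iff.2 (neg_lt_zero.2 hx))
  have hle : 1 - exp (-x) ≤ x := by linarith [one_sub_le_exp_neg x]
  have hge : x ≤ (1 + x) * (1 - exp (-x)) := by
    have hone : (1 + x) * exp (-x) ≤ 1 := by
      rw [exp_neg, ← div_eq_mul_inv, div_le_one (exp_pos x), add_comm]
      exact add_one_le_exp x
    linarith
  refine ⟨sub_nonneg.2 (inv_anti₀ hpos hle), ?_⟩
  rw [digammaKernel, sub_le_iff_le_add, inv_le_iff_one_le_mul₀ hpos]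
  calc 1 = x⁻¹ * x := (inv_mul_cancel₀ hx.ne').symm
    _ ≤ x⁻¹ * ((1 + x) * (1 - exp (-x))) := by gcongr
    _ = (1 + x⁻¹) * (1 - exp (-x)) := by field_simp; ring

lemma exp_neg_mul_digammaKernel (x : ℝ) :
    exp (-x) * digammaKernel x = 1 / (exp x - 1) - 1 / (x * exp x) := by
  have hdenom : exp x - 1 = exp x * (1 - exp (-x)) := by
    rw [mul_sub, ← exp_add]
    simp
  rw [hdenom, digammaKernel, exp_neg]
  simp only [one_div, mul_inv]
  ring

lemma exp_mul_digammaKernel_mem_Icc (a : ℝ) (hx : 0 < x) :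
    exp (-a * x) * digammaKernel x ∈ Icc 0 (exp (-a * x)) :=
  ⟨mul_nonneg (exp_nonneg _) (digammaKernel_mem_Icc hx).1,
    mul_le_of_le_one_right (exp_nonneg _) (digammaKernel_mem_Icc hx).2⟩

lemma integrableOn_exp_mul_digammaKernel (ha : 0 < a) :
    IntegrableOn (fun x ↦ exp (-a * x) * digammaKernel x) (Ioi 0) := by
  refine (exp_neg_integrableOn_Ioi 0 ha).mono'
    (Measurable.aestronglyMeasurable (by unfold digammaKernel; fun_prop)) ?_
  filter_upwards [ae_restrict_mem measurableSet_Ioi] with x hx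
  obtain ⟨hnonneg, hle⟩ := exp_mul_digammaKernel_mem_Icc a hx
  rwa [norm_of_nonneg hnonneg]

lemma digammaKernelLaplace_mem_Icc (ha : 0 < a) : digammaKernelLaplace a ∈ Icc 0 a⁻¹ := by
  refine ⟨setIntegral_nonneg measurableSet_Ioi fun x hx ↦
    (exp_mul_digammaKernel_mem_Icc a hx).1, ?_⟩
  rw [← integral_exp_neg_mul_Ioi_zero ha]
  exact setIntegral_mono_on (integrableOn_exp_mul_digammaKernel ha) (exp_neg_integrableOn_Ioi 0 ha)
    measurableSet_Ioi fun x hx ↦ (exp_mul_digammaKernel_mem_Icc a hx).2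

lemma tendsto_digammaKernelLaplace_atTop : Tendsto digammaKernelLaplace atTop (𝓝 0) := by
  refine squeeze_zero' ?_ ?_ tendsto_inv_atTop_zero
  all_goals filter_upwards [eventually_gt_atTop 0] with a ha
  · exact (digammaKernelLaplace_mem_Icc ha).1
  · exact (digammaKernelLaplace_mem_Icc ha).2

lemma exp_mul_digammaKernel_sub (a : ℝ) (hx : 0 < x) :
    exp (-a * x) * digammaKernel x - exp (-(a + 1) * x) * digammaKernel x =
      exp (-a * x) - x⁻¹ * (exp (-a * x) - exp (-(a + 1) * x)) := by
  have hshift : exp (-(a + 1) * x) = exp (-a * x) * exp (-x) := by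
    rw [← exp_add]
    ring_nf
  have hcancel : (1 - exp (-x)) * (1 - exp (-x))⁻¹ = 1 :=
    mul_inv_cancel₀ (sub_pos.2 (exp_lt_one_iff.2 (neg_lt_zero.2 hx))).ne'
  rw [hshift, digammaKernel]
  linear_combination exp (-a * x) * hcancel

lemma digammaKernelLaplace_sub_add_one (ha : 0 < a) :
    digammaKernelLaplace a - digammaKernelLaplace (a + 1) = a⁻¹ - (log (a + 1) - log a) := by
  have ha' : 0 < a + 1 := by positivity
  calc digammaKernelLaplace a - digammaKernelLaplace (a + 1)
    _ = ∫ x in Ioi 0, (exp (-a * x) * digammaKernel x - exp (-(a + 1) * x) * digammaKernel x) :=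
      (integral_sub (integrableOn_exp_mul_digammaKernel ha)
        (integrableOn_exp_mul_digammaKernel ha')).symm
    _ = ∫ x in Ioi 0, (exp (-a * x) - x⁻¹ * (exp (-a * x) - exp (-(a + 1) * x))) :=
      setIntegral_congr_fun measurableSet_Ioi fun x hx ↦ exp_mul_digammaKernel_sub a hx
    _ = a⁻¹ - (log (a + 1) - log a) := by
      rw [integral_sub (exp_neg_integrableOn_Ioi 0 ha) (integrableOn_inv_mul_exp_sub_exp ha ha'),
        integral_exp_neg_mul_Ioi_zero ha, integral_inv_mul_exp_sub_exp ha ha']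

lemma digammaKernelLaplace_sub_add_natCast (ha : 0 < a) (n : ℕ) :
    digammaKernelLaplace a - digammaKernelLaplace (a + n) =
      ∑ k ∈ Finset.range n, (a + k)⁻¹ - (log (a + n) - log a) := by
  induction n with
  | zero => simp
  | succ n ih =>
    have hstep := digammaKernelLaplace_sub_add_one (a := a + n) (by positivity)
    rw [Finset.sum_range_succ, Nat.cast_succ, ← add_assoc]
    linear_combination ih + hstep

lemma tendsto_sum_inv_sub_log (ha : 0 < a) :
    Tendsto (fun n : ℕ ↦ ∑ k ∈ Finset.range n, (a + k)⁻¹ - (log (a + n) - log a)) atTop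
      (𝓝 (digammaKernelLaplace a)) := by
  have hremainder : Tendsto (fun n : ℕ ↦ digammaKernelLaplace (a + n)) atTop (𝓝 0) :=
    tendsto_digammaKernelLaplace_atTop.comp
      (tendsto_atTop_add_const_left _ a tendsto_natCast_atTop_atTop)
  simpa [← digammaKernelLaplace_sub_add_natCast ha] using hremainder.const_sub _

lemma digammaKernelLaplace_one : digammaKernelLaplace 1 = eulerMascheroniConstant := by
  refine tendsto_nhds_unique (tendsto_sum_inv_sub_log one_pos)
    (tendsto_harmonic_sub_log_add_one.congr fun n ↦ ?_)
  simp [harmonic, add_comm]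

end DigammaKernel

theorem stmt14 :
    ∫ x in Set.Ioi (0 : ℝ), (1 / (Real.exp x - 1) - 1 / (x * Real.exp x)) =
      Real.eulerMascheroniConstant := by
  rw [← digammaKernelLaplace_one, digammaKernelLaplace]
  simp only [neg_one_mul, exp_neg_mul_digammaKernel]
end

section
/- Let χ be a Dirichlet character modulo N. For every complex s with Re(s) > 1, ∑_{p prime} χ(p) p^{-s} = ∑_{n=1}^∞ (μ(n)/n) L_{χⁿ}(ns), where μ is the Möbius function, χⁿ is the n-th power character, and L_ψ(w) = ∑_{p prime} ∑_{k=1}^∞ ψ(p)^k p^{-kw}/k is the logarithm of the Dirichlet L-function L(w, ψ) given by its absolutely convergent Euler-product series (so exp(L_ψ(w)) = L(w, ψ) for Re(w) > 1); both series converge absolutely. -/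
/-!
For `‖a‖ < 1`, expanding the logarithms and collecting the terms with `n k = m` gives
`∑ₙ μ(n)/n · (-log (1 - aⁿ)) = ∑ₘ (∑_{d ∣ m} μ(d)) aᵐ/m = a`. Apply this to `a = χ(p) p⁻ˢ` and sum
over the primes `p`: since `(χⁿ)(p) p⁻ⁿˢ = aⁿ`, exchanging the sums over `p` and `n` turns
`∑ₚ -log (1 - aⁿ)` into `L_{χⁿ}(ns)`.
-/

/-- `L_ψ(w) = ∑_{p prime} ∑_{k ≥ 1} ψ(p)^k p^{-kw}/k`, the logarithm of the Dirichlet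
L-function `L(w, ψ)` given by its absolutely convergent Euler-product series for `Re(w) > 1`. -/
noncomputable def logLSeries {N : ℕ} (ψ : DirichletCharacter ℂ N) (w : ℂ) : ℂ :=
  ∑' p : Nat.Primes, ∑' k : ℕ,
    (ψ ((p : ℕ) : ZMod N)) ^ (k + 1) * ((p : ℕ) : ℂ) ^ (-((k : ℂ) + 1) * w) / ((k : ℂ) + 1)

open Complex Filter Topology
open scoped ArithmeticFunction.Moebius ArithmeticFunction.zeta

theorem tsum_pnat_prod_eq_tsum_sum_divisorsAntidiagonal {E : Type*} [AddCommGroup E]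
    [UniformSpace E] [IsUniformAddGroup E] [CompleteSpace E] [T2Space E] {f : ℕ × ℕ → E}
    (hf : Summable fun x : ℕ+ × ℕ+ ↦ f (x.1, x.2)) :
    ∑' x : ℕ+ × ℕ+, f (x.1, x.2) = ∑' m : ℕ+, ∑ d ∈ (m : ℕ).divisorsAntidiagonal, f d := by
  have hf' := sigmaAntidiagonalEquivProd.summable_iff.mpr hf
  rw [← sigmaAntidiagonalEquivProd.tsum_eq]
  exact hf'.tsum_sigma.trans (tsum_congr fun m ↦ Finset.tsum_subtype _ f)

theorem summable_prod_pow_succ {ι : Type*} {r : ι → ℝ} (hr : Summable r) (hr₀ : ∀ i, 0 ≤ r i)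
    (hr₁ : ∀ i, r i < 1) : Summable fun x : ι × ℕ ↦ r x.1 ^ (x.2 + 1) := by
  have hgeom (i : ι) : HasSum (fun n ↦ r i ^ (n + 1)) (r i * (1 - r i)⁻¹) := by
    simpa only [pow_succ'] using (hasSum_geometric_of_lt_one (hr₀ i) (hr₁ i)).mul_left (r i)
  have hlim : Tendsto (fun i ↦ (1 - r i)⁻¹) cofinite (𝓝 (1 - 0)⁻¹) :=
    (hr.tendsto_cofinite_zero.const_sub 1).inv₀ (by norm_num)
  refine (summable_prod_of_nonneg fun x ↦ pow_nonneg (hr₀ x.1) _).mpr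
    ⟨fun i ↦ (hgeom i).summable, ?_⟩
  simpa only [(hgeom _).tsum_eq] using hr.norm.mul_tendsto_const hlim

theorem tsum_pnat_pow_div_eq_neg_log_one_sub {z : ℂ} (hz : ‖z‖ < 1) :
    ∑' k : ℕ+, z ^ (k : ℕ) / (k : ℕ) = -log (1 - z) := by
  rw [tsum_pnat_eq_tsum_of_eq_zero (f := fun k : ℕ ↦ z ^ k / k) (by simp)]
  exact (hasSum_taylorSeries_neg_log hz).tsum_eq

theorem norm_div_natCast_le_one {z : ℂ} {n : ℕ} (hz : ‖z‖ ≤ n) : ‖z / n‖ ≤ 1 := by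
  rw [norm_div, norm_natCast]
  exact div_le_one_of_le₀ hz n.cast_nonneg

section DivisorSums

theorem sum_divisorsAntidiagonal_div_mul_pow_div {K : Type*} [Field K]
    (f : ArithmeticFunction K) (a : K) (m : ℕ) :
    ∑ d ∈ m.divisorsAntidiagonal, f d.1 / d.1 * ((a ^ d.1) ^ d.2 / d.2) =
      (f * ζ) m / m * a ^ m := by
  rw [ArithmeticFunction.coe_mul_zeta_apply, ← Nat.sum_divisorsAntidiagonal fun d _ ↦ f d,
    Finset.sum_div, Finset.sum_mul]
  refine Finset.sum_congr rfl fun d hd ↦ ?_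
  rw [← (Nat.mem_divisorsAntidiagonal.mp hd).1, div_mul_div_comm, pow_mul, Nat.cast_mul,
    div_mul_eq_mul_div]

variable {f : ArithmeticFunction ℂ}

theorem summable_div_mul_pow_div (hf : ∀ n, ‖f n‖ ≤ n) {a : ℂ} (ha : ‖a‖ < 1) :
    Summable fun x : ℕ+ × ℕ+ ↦
      f x.1 / (x.1 : ℕ) * ((a ^ (x.1 : ℕ)) ^ (x.2 : ℕ) / (x.2 : ℕ)) := by
  have hpow : Summable fun x : ℕ+ × ℕ+ ↦ ‖a‖ ^ (x.1 * x.2 : ℕ) := by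
    simpa using summable_prod_mul_pow 0 (r := ‖a‖) (by simpa using ha)
  refine .of_norm_bounded hpow fun x ↦ ?_
  rw [norm_mul, norm_div (_ ^ _), ← pow_mul, norm_pow, norm_natCast]
  have hdiv : ‖a‖ ^ (x.1 * x.2 : ℕ) / (x.2 : ℕ) ≤ ‖a‖ ^ (x.1 * x.2 : ℕ) :=
    div_le_self (by positivity) (Nat.one_le_cast.mpr x.2.pos)
  exact (mul_le_of_le_one_left (by positivity) (norm_div_natCast_le_one (hf _))).trans hdiv

-- The logarithmic analogue of the Lambert series `∑ f(n) aⁿ / (1 - aⁿ) = ∑ (f * ζ)(m) aᵐ`.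
theorem tsum_div_mul_neg_log_one_sub_pow (hf : ∀ n, ‖f n‖ ≤ n) {a : ℂ} (ha : ‖a‖ < 1) :
    ∑' n : ℕ+, f n / (n : ℕ) * -log (1 - a ^ (n : ℕ)) =
      ∑' m : ℕ+, (f * ζ) m / (m : ℕ) * a ^ (m : ℕ) := by
  let F (d : ℕ × ℕ) : ℂ := f d.1 / d.1 * ((a ^ d.1) ^ d.2 / d.2)
  have hF : Summable fun x : ℕ+ × ℕ+ ↦ F (x.1, x.2) := summable_div_mul_pow_div hf ha
  have hpow (n : ℕ+) : ‖a ^ (n : ℕ)‖ < 1 := by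
    rw [norm_pow]
    exact pow_lt_one₀ (norm_nonneg a) ha n.ne_zero
  calc ∑' n : ℕ+, f n / (n : ℕ) * -log (1 - a ^ (n : ℕ))
      = ∑' n : ℕ+, ∑' k : ℕ+, F (n, k) := tsum_congr fun n ↦ by
        rw [← tsum_pnat_pow_div_eq_neg_log_one_sub (hpow n), ← tsum_mul_left]
    _ = ∑' x : ℕ+ × ℕ+, F (x.1, x.2) := hF.tsum_prod.symm
    _ = ∑' m : ℕ+, ∑ d ∈ (m : ℕ).divisorsAntidiagonal, F d :=
        tsum_pnat_prod_eq_tsum_sum_divisorsAntidiagonal hF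
    _ = ∑' m : ℕ+, (f * ζ) m / (m : ℕ) * a ^ (m : ℕ) :=
        tsum_congr fun m ↦ sum_divisorsAntidiagonal_div_mul_pow_div f a m

theorem summable_div_mul_neg_log_one_sub_pow (hf : ∀ n, ‖f n‖ ≤ n) {ι : Type*} {a : ι → ℂ}
    (ha : Summable fun i ↦ ‖a i‖) (ha₁ : ∀ i, ‖a i‖ < 1) :
    Summable fun x : ℕ × ι ↦ f (x.1 + 1) / ((x.1 : ℂ) + 1) * -log (1 - a x.2 ^ (x.1 + 1)) := by
  have hpow : Summable fun x : ι × ℕ ↦ -a x.1 ^ (x.2 + 1) := by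
    refine .of_norm ?_
    simpa only [norm_neg, norm_pow] using
      summable_prod_pow_succ ha (fun i ↦ norm_nonneg (a i)) ha₁
  have hlog : Summable fun x : ℕ × ι ↦ ‖log (1 - a x.2 ^ (x.1 + 1))‖ := by
    simpa only [← sub_eq_add_neg] using! (summable_log_one_add_of_summable hpow).prod_symm.norm
  refine .of_norm_bounded hlog fun x ↦ ?_
  rw [norm_mul, norm_neg]
  exact mul_le_of_le_one_left (norm_nonneg _)
    (mod_cast norm_div_natCast_le_one (hf (x.1 + 1)))

end DivisorSums

section MoebiusInversion

theorem norm_moebius_le_natCast (n : ℕ) : ‖(μ : ArithmeticFunction ℂ) n‖ ≤ n := by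
  rcases n.eq_zero_or_pos with rfl | hn
  · simp
  · rw [ArithmeticFunction.intCoe_apply, norm_intCast]
    have hμ : |μ n| ≤ n := ArithmeticFunction.abs_moebius_le_one.trans (mod_cast hn)
    exact_mod_cast hμ

theorem tsum_moebius_div_mul_neg_log_one_sub_pow {a : ℂ} (ha : ‖a‖ < 1) :
    ∑' n : ℕ, (μ (n + 1) : ℂ) / ((n : ℂ) + 1) * -log (1 - a ^ (n + 1)) = a := by
  have hone : ∑' m : ℕ+, (1 : ArithmeticFunction ℂ) m / (m : ℕ) * a ^ (m : ℕ) = a := by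
    rw [tsum_eq_single 1 fun m hm ↦ by simp [hm]]
    simp
  have hsucc := tsum_pnat_eq_tsum_succ
    (f := fun n ↦ (μ : ArithmeticFunction ℂ) n / n * -log (1 - a ^ n))
  rw [tsum_div_mul_neg_log_one_sub_pow norm_moebius_le_natCast ha,
    ArithmeticFunction.coe_moebius_mul_coe_zeta, hone] at hsucc
  simpa using hsucc.symm

variable {ι : Type*} {a : ι → ℂ}

theorem summable_moebius_div_mul_neg_log_one_sub_pow (ha : Summable fun i ↦ ‖a i‖)
    (ha₁ : ∀ i, ‖a i‖ < 1) :
    Summable fun x : ℕ × ι ↦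
      (μ (x.1 + 1) : ℂ) / ((x.1 : ℂ) + 1) * -log (1 - a x.2 ^ (x.1 + 1)) := by
  simpa using summable_div_mul_neg_log_one_sub_pow norm_moebius_le_natCast ha ha₁

theorem summable_norm_moebius_div_mul_tsum_neg_log_one_sub_pow (ha : Summable fun i ↦ ‖a i‖)
    (ha₁ : ∀ i, ‖a i‖ < 1) :
    Summable fun n : ℕ ↦
      ‖(μ (n + 1) : ℂ) / ((n : ℂ) + 1) * ∑' i, -log (1 - a i ^ (n + 1))‖ := by
  simpa only [tsum_mul_left] using (summable_moebius_div_mul_neg_log_one_sub_pow ha ha₁).prod.norm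

theorem tsum_eq_tsum_moebius_div_mul_tsum_neg_log_one_sub_pow (ha : Summable fun i ↦ ‖a i‖)
    (ha₁ : ∀ i, ‖a i‖ < 1) :
    ∑' i, a i =
      ∑' n : ℕ, (μ (n + 1) : ℂ) / ((n : ℂ) + 1) * ∑' i, -log (1 - a i ^ (n + 1)) := by
  simp_rw [← tsum_mul_left]
  refine Eq.trans ?_ (summable_moebius_div_mul_neg_log_one_sub_pow ha ha₁).tsum_comm
  exact tsum_congr fun i ↦ (tsum_moebius_div_mul_neg_log_one_sub_pow (ha₁ i)).symm

end MoebiusInversion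

section PrimeSums

variable {N : ℕ} (χ : DirichletCharacter ℂ N) {s : ℂ}

theorem norm_dirichletCharacter_mul_prime_cpow_lt_one (hs : 0 < s.re) (p : Nat.Primes) :
    ‖χ p * (p : ℂ) ^ (-s)‖ < 1 := by
  grw [norm_mul, χ.norm_le_one, norm_natCast_cpow_of_pos p.prop.pos, one_mul]
  exact Real.rpow_lt_one_of_one_lt_of_neg (mod_cast p.prop.one_lt) (by simpa using hs)

theorem summable_norm_dirichletCharacter_mul_prime_cpow (hs : 1 < s.re) :
    Summable fun p : Nat.Primes ↦ ‖χ p * (p : ℂ) ^ (-s)‖ :=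
  (summable_dirichletSummand χ hs).subtype Nat.Prime

theorem logLSeries_eq_tsum_neg_log_one_sub (hs : 0 < s.re) :
    logLSeries χ s = ∑' p : Nat.Primes, -log (1 - χ p * (p : ℂ) ^ (-s)) := by
  refine tsum_congr fun p ↦ ?_
  have hp := norm_dirichletCharacter_mul_prime_cpow_lt_one χ hs p
  rw [← (hasSum_taylorSeries_neg_log' hp).tsum_eq]
  refine tsum_congr fun k ↦ ?_
  rw [mul_pow, ← cpow_nat_mul, Nat.cast_succ, neg_mul_comm]

theorem exp_logLSeries (hs : 1 < s.re) :
    exp (logLSeries χ s) = LSeries (fun n ↦ χ n) s := by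
  rw [logLSeries_eq_tsum_neg_log_one_sub χ (zero_lt_one.trans hs),
    DirichletCharacter.LSeries_eulerProduct_exp_log χ hs]

theorem logLSeries_pow_succ (hs : 0 < s.re) (n : ℕ) :
    logLSeries (χ ^ (n + 1)) (((n : ℂ) + 1) * s) =
      ∑' p : Nat.Primes, -log (1 - (χ p * (p : ℂ) ^ (-s)) ^ (n + 1)) := by
  have hns : 0 < (((n : ℂ) + 1) * s).re := by
    rw [← Nat.cast_succ, ← ofReal_natCast, re_ofReal_mul]
    positivity
  rw [logLSeries_eq_tsum_neg_log_one_sub _ hns]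
  refine tsum_congr fun p ↦ ?_
  rw [MulChar.pow_apply' χ n.succ_ne_zero, mul_pow, ← cpow_nat_mul, Nat.cast_succ, mul_neg]

end PrimeSums

theorem stmt18 {N : ℕ} (χ : DirichletCharacter ℂ N) (s : ℂ) (hs : 1 < s.re) :
    (∀ (ψ : DirichletCharacter ℂ N) (w : ℂ), 1 < w.re →
      Complex.exp (logLSeries ψ w) = LSeries (fun k => ψ (k : ZMod N)) w) ∧
    Summable (fun p : Nat.Primes => ‖χ ((p : ℕ) : ZMod N) * ((p : ℕ) : ℂ) ^ (-s)‖) ∧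
    Summable (fun n : ℕ =>
      ‖((ArithmeticFunction.moebius (n + 1) : ℂ) / ((n : ℂ) + 1)) *
        logLSeries (χ ^ (n + 1)) (((n : ℂ) + 1) * s)‖) ∧
    ∑' p : Nat.Primes, χ ((p : ℕ) : ZMod N) * ((p : ℕ) : ℂ) ^ (-s) =
      ∑' n : ℕ, ((ArithmeticFunction.moebius (n + 1) : ℂ) / ((n : ℂ) + 1)) *
        logLSeries (χ ^ (n + 1)) (((n : ℂ) + 1) * s) := by
  have hs₀ : 0 < s.re := zero_lt_one.trans hs
  have ha := summable_norm_dirichletCharacter_mul_prime_cpow χ hs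
  have ha₁ := norm_dirichletCharacter_mul_prime_cpow_lt_one χ hs₀
  simp only [logLSeries_pow_succ χ hs₀]
  exact ⟨fun ψ w hw ↦ exp_logLSeries ψ hw, ha,
    summable_norm_moebius_div_mul_tsum_neg_log_one_sub_pow ha ha₁,
    tsum_eq_tsum_moebius_div_mul_tsum_neg_log_one_sub_pow ha ha₁⟩
end

section
/- Let χ be a Dirichlet character modulo N and t > 0, and define P_{χ,t}(1/2+iτ) = ∑_{p ≤ t, p prime} χ(p) p^{-(1/2+iτ)}. Then for every real Δ, lim_{T→∞} (1/T) ∫_T^{2T} Re P_{χ,t}(1/2+i(τ+Δ)) · Re P_{χ,t}(1/2+iτ) dτ = (1/2) ∑_{p ≤ t, p prime, p ∤ N} cos(Δ log p)/p. -/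
open MeasureTheory Filter Real

/-- The truncated prime Dirichlet L-series
`P_{χ,t}(1/2 + iτ) = ∑_{p ≤ t} χ(p) p^{-(1/2+iτ)}`. -/
noncomputable def primeLTrunc {N : ℕ} (χ : DirichletCharacter ℂ N) (t : ℝ) (τ : ℝ) : ℂ :=
  ∑ p ∈ primesUpTo t, χ ((p : ℕ) : ZMod N) * (p : ℂ) ^ (-(1 / 2 + Complex.I * (τ : ℂ)))

/-!
On the line `Re s = 1/2` the series `P_{χ,t}` is a trigonometric polynomial in `τ` with frequencies
`-log p`. Write `Re z · Re w = ½ Re (z w + z w̄)` with `z = P_{χ,t}(1/2 + i(τ + Δ))` and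
`w = P_{χ,t}(1/2 + iτ)`. A single exponential `e^{iωτ}` has mean `0` over `[T, 2T]` unless `ω = 0`.
The frequencies `-log p - log q` of `z w` never vanish, and the frequencies `log q - log p` of
`z w̄` vanish only on the diagonal, where the coefficient is `|χ(p)|² p⁻¹ e^{-iΔ log p}`.
-/

/-- `f` has mean value `m` over the long windows `[T, 2T]`, i.e. `m` is the limiting expectation of
`f τ` for `τ` uniform on `[T, 2T]`. Local integrability is required so that the integrals are never
junk values. -/
structure HasDyadicMean {E : Type*} [NormedAddCommGroup E] [NormedSpace ℝ E] (f : ℝ → E) (m : E) :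
    Prop where
  intervalIntegrable : ∀ a b, IntervalIntegrable f volume a b
  tendsto : Tendsto (fun T : ℝ ↦ (1 / T) • ∫ τ in T..(2 * T), f τ) atTop (nhds m)

namespace HasDyadicMean

section Linearity

variable {E F : Type*} [NormedAddCommGroup E] [NormedSpace ℝ E] [NormedAddCommGroup F]
  [NormedSpace ℝ F]

theorem add {f g : ℝ → E} {m n : E} (hf : HasDyadicMean f m) (hg : HasDyadicMean g n) :
    HasDyadicMean (fun τ ↦ f τ + g τ) (m + n) where
  intervalIntegrable a b := (hf.intervalIntegrable a b).add (hg.intervalIntegrable a b)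
  tendsto := by
    simpa only [intervalIntegral.integral_add (hf.intervalIntegrable _ _)
      (hg.intervalIntegrable _ _), smul_add] using hf.tendsto.add hg.tendsto

theorem sum {ι : Type*} {s : Finset ι} {f : ι → ℝ → E} {m : ι → E}
    (h : ∀ i ∈ s, HasDyadicMean (f i) (m i)) :
    HasDyadicMean (fun τ ↦ ∑ i ∈ s, f i τ) (∑ i ∈ s, m i) where
  intervalIntegrable a b := by
    simpa only [Finset.sum_fn] using
      IntervalIntegrable.sum s fun i hi ↦ (h i hi).intervalIntegrable a b
  tendsto := by
    simpa only [intervalIntegral.integral_finsetSum fun i hi ↦ (h i hi).intervalIntegrable _ _,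
      Finset.smul_sum] using tendsto_finsetSum s fun i hi ↦ (h i hi).tendsto

theorem map [CompleteSpace E] [CompleteSpace F] {f : ℝ → E} {m : E} (L : E →L[ℝ] F)
    (hf : HasDyadicMean f m) : HasDyadicMean (fun τ ↦ L (f τ)) (L m) where
  intervalIntegrable a b :=
    ⟨L.integrable_comp (hf.intervalIntegrable a b).1,
      L.integrable_comp (hf.intervalIntegrable a b).2⟩
  tendsto := by
    simpa only [L.intervalIntegral_comp_comm (hf.intervalIntegrable _ _), Function.comp_def,
      map_smul] using (L.continuous.tendsto m).comp hf.tendsto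

theorem const [CompleteSpace E] (m : E) : HasDyadicMean (fun _ ↦ m) m where
  intervalIntegrable _ _ := intervalIntegrable_const
  tendsto := by
    refine tendsto_const_nhds.congr' ?_
    filter_upwards [eventually_ne_atTop 0] with T hT
    rw [intervalIntegral.integral_const, two_mul, add_sub_cancel_right, smul_smul,
      one_div_mul_cancel hT, one_smul]

end Linearity

theorem zero_of_norm_integral_le {E : Type*} [NormedAddCommGroup E] [NormedSpace ℝ E]
    {f : ℝ → E} {C : ℝ} (hf : ∀ a b, IntervalIntegrable f volume a b)
    (hC : ∀ a b, ‖∫ τ in a..b, f τ‖ ≤ C) : HasDyadicMean f 0 where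
  intervalIntegrable := hf
  tendsto := by
    have hinv : Tendsto (fun T : ℝ ↦ 1 / T) atTop (nhds 0) := by
      simpa only [one_div] using tendsto_inv_atTop_zero
    exact hinv.zero_smul_isBoundedUnder_le
      (isBoundedUnder_of ⟨C, fun T ↦ hC T (2 * T)⟩)

end HasDyadicMean

theorem norm_integral_exp_mul_I_le {ω : ℝ} (hω : ω ≠ 0) (a b : ℝ) :
    ‖∫ τ in a..b, Complex.exp ((ω * τ : ℝ) * Complex.I)‖ ≤ 2 / |ω| := by
  have hc : (ω * Complex.I : ℂ) ≠ 0 :=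
    mul_ne_zero (Complex.ofReal_ne_zero.mpr hω) Complex.I_ne_zero
  simp only [Complex.ofReal_mul, mul_right_comm _ _ Complex.I]
  rw [integral_exp_mul_complex hc, norm_div, norm_mul, Complex.norm_I, mul_one, Complex.norm_real,
    Real.norm_eq_abs]
  have hunit (x : ℝ) : ‖Complex.exp (ω * Complex.I * x)‖ = 1 := by
    rw [mul_right_comm, ← Complex.ofReal_mul, Complex.norm_exp_ofReal_mul_I]
  gcongr
  calc ‖Complex.exp (ω * Complex.I * b) - Complex.exp (ω * Complex.I * a)‖
      ≤ ‖Complex.exp (ω * Complex.I * b)‖ + ‖Complex.exp (ω * Complex.I * a)‖ := norm_sub_le _ _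
    _ = 2 := by rw [hunit, hunit, one_add_one_eq_two]

theorem hasDyadicMean_exp_mul_I (ω : ℝ) :
    HasDyadicMean (fun τ : ℝ ↦ Complex.exp ((ω * τ : ℝ) * Complex.I)) (if ω = 0 then 1 else 0) := by
  split_ifs with hω
  · simpa only [hω, zero_mul, Complex.ofReal_zero, Complex.exp_zero] using HasDyadicMean.const 1
  · exact .zero_of_norm_integral_le
      (fun a b ↦ Continuous.intervalIntegrable (by fun_prop) a b) (norm_integral_exp_mul_I_le hω)

/-- The trigonometric polynomial `∑_{n ∈ s} c_n e^{i ω_n τ}` with arbitrary real frequencies `ω_n`.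
A Dirichlet polynomial restricted to a vertical line has this form, with `ω_n = -log n`. -/
noncomputable def trigPoly {ι : Type*} (s : Finset ι) (c : ι → ℂ) (ω : ι → ℝ) (τ : ℝ) : ℂ :=
  ∑ n ∈ s, c n * Complex.exp ((ω n * τ : ℝ) * Complex.I)

namespace trigPoly

open scoped ComplexConjugate

section Product

variable {ι κ : Type*} {s : Finset ι} {r : Finset κ} {c : ι → ℂ} {d : κ → ℂ} {ω : ι → ℝ} {ν : κ → ℝ}

theorem conj_apply (τ : ℝ) :
    conj (trigPoly s c ω τ) = trigPoly s (fun n ↦ conj (c n)) (fun n ↦ -ω n) τ := by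
  simp only [trigPoly, map_sum, map_mul, ← Complex.exp_conj, Complex.conj_ofReal, Complex.conj_I,
    mul_neg, neg_mul, Complex.ofReal_neg]

theorem add_apply (τ Δ : ℝ) :
    trigPoly s c ω (τ + Δ) =
      trigPoly s (fun n ↦ c n * Complex.exp ((ω n * Δ : ℝ) * Complex.I)) ω τ := by
  simp only [trigPoly, mul_add, Complex.ofReal_add, add_mul, Complex.exp_add]
  exact Finset.sum_congr rfl fun n _ ↦ by ring

variable (s r c d ω ν) in
theorem hasDyadicMean_mul :
    HasDyadicMean (fun τ ↦ trigPoly s c ω τ * trigPoly r d ν τ)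
      (∑ m ∈ s, ∑ n ∈ r, c m * d n * if ω m + ν n = 0 then 1 else 0) := by
  have hmul (τ : ℝ) : trigPoly s c ω τ * trigPoly r d ν τ = ∑ m ∈ s, ∑ n ∈ r,
      c m * d n * Complex.exp (((ω m + ν n) * τ : ℝ) * Complex.I) := by
    simp only [trigPoly, Finset.sum_mul_sum, mul_mul_mul_comm, ← Complex.exp_add, ← add_mul,
      ← Complex.ofReal_add]
  simp only [hmul]
  exact .sum fun m _ ↦ .sum fun n _ ↦
    (hasDyadicMean_exp_mul_I (ω m + ν n)).map (ContinuousLinearMap.mul ℝ ℂ (c m * d n))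

variable (c d) in
theorem hasDyadicMean_mul_of_add_ne_zero (h : ∀ m ∈ s, ∀ n ∈ r, ω m + ν n ≠ 0) :
    HasDyadicMean (fun τ ↦ trigPoly s c ω τ * trigPoly r d ν τ) 0 := by
  convert hasDyadicMean_mul s r c d ω ν using 1
  exact (Finset.sum_eq_zero fun m hm ↦ Finset.sum_eq_zero fun n hn ↦ by
    rw [if_neg (h m hm n hn), mul_zero]).symm

end Product

variable {ι : Type*} {s : Finset ι} (c d : ι → ℂ) {ω : ι → ℝ}

theorem hasDyadicMean_mul_conj (hω : Set.InjOn ω s) :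
    HasDyadicMean (fun τ ↦ trigPoly s c ω τ * conj (trigPoly s d ω τ))
      (∑ n ∈ s, c n * conj (d n)) := by
  simp only [conj_apply]
  convert hasDyadicMean_mul s s c (fun n ↦ conj (d n)) ω (fun n ↦ -ω n) using 1
  refine Finset.sum_congr rfl fun m hm ↦ ?_
  rw [Finset.sum_eq_single_of_mem m hm fun n hn hnm ↦ ?_, if_pos (add_neg_cancel _), mul_one]
  rw [if_neg fun h ↦ hnm (hω hn hm (add_neg_eq_zero.mp h).symm), mul_zero]

theorem hasDyadicMean_re_mul_re (hω : Set.InjOn ω s) (hne : ∀ m ∈ s, ∀ n ∈ s, ω m + ω n ≠ 0) :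
    HasDyadicMean (fun τ ↦ (trigPoly s c ω τ).re * (trigPoly s d ω τ).re)
      ((1 / 2) * ∑ n ∈ s, (c n * conj (d n)).re) := by
  have hre (z w : ℂ) : z.re * w.re = ((1 / 2 : ℝ) • Complex.reCLM) (z * w + z * conj w) := by
    simp only [smul_apply, Complex.reCLM_apply, smul_eq_mul, Complex.add_re,
      Complex.mul_re, Complex.conj_re, Complex.conj_im]
    ring
  have hmean := ((hasDyadicMean_mul_of_add_ne_zero c d hne).add
    (hasDyadicMean_mul_conj c d hω)).map ((1 / 2 : ℝ) • Complex.reCLM)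
  simpa only [← hre, zero_add, smul_apply, Complex.reCLM_apply, Complex.re_sum,
    smul_eq_mul] using hmean

theorem hasDyadicMean_re_add_mul_re (hω : Set.InjOn ω s)
    (hne : ∀ m ∈ s, ∀ n ∈ s, ω m + ω n ≠ 0) (Δ : ℝ) :
    HasDyadicMean (fun τ ↦ (trigPoly s c ω (τ + Δ)).re * (trigPoly s c ω τ).re)
      ((1 / 2) * ∑ n ∈ s, ‖c n‖ ^ 2 * Real.cos (ω n * Δ)) := by
  have hcoeff (n : ι) : (c n * Complex.exp ((ω n * Δ : ℝ) * Complex.I) * conj (c n)).re =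
      ‖c n‖ ^ 2 * Real.cos (ω n * Δ) := by
    rw [mul_right_comm, Complex.mul_conj', ← Complex.ofReal_pow, Complex.re_ofReal_mul,
      Complex.exp_ofReal_mul_I_re]
  simpa only [add_apply, hcoeff] using hasDyadicMean_re_mul_re
    (fun n ↦ c n * Complex.exp ((ω n * Δ : ℝ) * Complex.I)) c hω hne

end trigPoly

theorem norm_dirichletCharacter_natCast {F : Type*} [NormedField F] {N : ℕ}
    (χ : DirichletCharacter F N) (n : ℕ) : ‖χ (n : ZMod N)‖ = if n.Coprime N then 1 else 0 := by
  split_ifs with h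
  · simpa only [ZMod.coe_unitOfCoprime] using χ.unit_norm_eq_one (ZMod.unitOfCoprime n h)
  · rw [χ.map_nonunit fun hu ↦ h ((ZMod.isUnit_iff_coprime n N).mp hu), norm_zero]

theorem natCast_cpow_neg_add_I_mul {n : ℕ} (hn : n ≠ 0) (s : ℂ) (τ : ℝ) :
    (n : ℂ) ^ (-(s + Complex.I * τ)) =
      (n : ℂ) ^ (-s) * Complex.exp ((-Real.log n * τ : ℝ) * Complex.I) := by
  have hn' : (n : ℂ) ≠ 0 := Nat.cast_ne_zero.mpr hn
  rw [neg_add, Complex.cpow_add _ _ hn', Complex.cpow_def_of_ne_zero hn' (-(Complex.I * τ)),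
    ← Complex.natCast_log]
  congr 2
  push_cast
  ring

theorem prime_of_mem_primesUpTo {t : ℝ} {p : ℕ} (hp : p ∈ primesUpTo t) : p.Prime :=
  (Finset.mem_filter.mp hp).2

/-- The coefficient `χ(n) n^{-1/2}` with which `n^{-iτ}` enters `P_{χ,t}(1/2 + iτ)`. -/
noncomputable def primeLTruncCoeff {N : ℕ} (χ : DirichletCharacter ℂ N) (n : ℕ) : ℂ :=
  χ (n : ZMod N) * (n : ℂ) ^ (-(1 / 2) : ℂ)

theorem primeLTrunc_eq_trigPoly {N : ℕ} (χ : DirichletCharacter ℂ N) (t τ : ℝ) :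
    primeLTrunc χ t τ =
      trigPoly (primesUpTo t) (primeLTruncCoeff χ) (fun p ↦ -Real.log p) τ :=
  Finset.sum_congr rfl fun p hp ↦ by
    rw [natCast_cpow_neg_add_I_mul (prime_of_mem_primesUpTo hp).ne_zero,
      primeLTruncCoeff, mul_assoc]

theorem sq_norm_primeLTruncCoeff {N n : ℕ} (χ : DirichletCharacter ℂ N) (hn : n ≠ 0) :
    ‖primeLTruncCoeff χ n‖ ^ 2 = if n.Coprime N then 1 / (n : ℝ) else 0 := by
  have hcpow : ‖(n : ℂ) ^ (-(1 / 2) : ℂ)‖ ^ 2 = 1 / (n : ℝ) := by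
    have hre : (-(1 / 2) : ℂ).re * (2 : ℕ) = -1 := by norm_num
    rw [Complex.norm_natCast_cpow_of_pos (Nat.pos_of_ne_zero hn),
      ← Real.rpow_mul_natCast n.cast_nonneg, hre, Real.rpow_neg_one, one_div]
  rw [primeLTruncCoeff, norm_mul, mul_pow, hcpow, norm_dirichletCharacter_natCast, ite_pow,
    one_pow, zero_pow two_ne_zero, ite_mul, one_mul, zero_mul]

theorem log_pos_of_mem_primesUpTo {t : ℝ} {p : ℕ} (hp : p ∈ primesUpTo t) : 0 < Real.log p :=
  Real.log_pos (Nat.one_lt_cast.mpr (prime_of_mem_primesUpTo hp).one_lt)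

theorem injOn_neg_log_primesUpTo (t : ℝ) :
    Set.InjOn (fun p : ℕ ↦ -Real.log p) (primesUpTo t) := by
  have hcast : Set.MapsTo (Nat.cast : ℕ → ℝ) (primesUpTo t) (Set.Ioi 0) := fun p hp ↦
    Set.mem_Ioi.mpr <| Nat.cast_pos.mpr (prime_of_mem_primesUpTo hp).pos
  exact neg_injective.comp_injOn (Real.log_injOn_pos.comp Nat.cast_injective.injOn hcast)

theorem sum_sq_norm_primeLTruncCoeff_mul_cos {N : ℕ} (χ : DirichletCharacter ℂ N) (t Δ : ℝ) :
    ∑ p ∈ primesUpTo t, ‖primeLTruncCoeff χ p‖ ^ 2 * Real.cos (-Real.log p * Δ) =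
      ∑ p ∈ (primesUpTo t).filter (fun p ↦ ¬ p ∣ N), Real.cos (Δ * Real.log p) / p := by
  rw [Finset.sum_filter]
  refine Finset.sum_congr rfl fun p hp ↦ ?_
  have hprime := prime_of_mem_primesUpTo hp
  rw [sq_norm_primeLTruncCoeff χ hprime.ne_zero, neg_mul, Real.cos_neg,
    mul_comm _ Δ, ite_mul, zero_mul, one_div_mul_eq_div]
  simp only [hprime.coprime_iff_not_dvd]

theorem stmt19 {N : ℕ} (χ : DirichletCharacter ℂ N) (t : ℝ) (ht : 0 < t) (Δ : ℝ) :
    Tendsto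
      (fun T : ℝ => (1 / T) *
        ∫ τ in T..(2 * T), (primeLTrunc χ t (τ + Δ)).re * (primeLTrunc χ t τ).re)
      atTop
      (nhds ((1 / 2) *
        ∑ p ∈ (primesUpTo t).filter (fun p => ¬ p ∣ N), Real.cos (Δ * Real.log p) / p)) := by
  have hne : ∀ p ∈ primesUpTo t, ∀ q ∈ primesUpTo t, -Real.log p + -Real.log q ≠ 0 :=
    fun p hp q hq ↦ ne_of_lt <| by
      linarith [log_pos_of_mem_primesUpTo hp, log_pos_of_mem_primesUpTo hq]
  have hmean := trigPoly.hasDyadicMean_re_add_mul_re (primeLTruncCoeff χ)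
    (injOn_neg_log_primesUpTo t) hne Δ
  rw [sum_sq_norm_primeLTruncCoeff_mul_cos] at hmean
  simpa only [primeLTrunc_eq_trigPoly, smul_eq_mul] using hmean.tendsto
end
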